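/- Let 1 < q < ∞ and α, β ≥ 0. Then for every ε > 0: limsup_{n→∞} n^{1/q}·[ln(n+1)]^{−1/(2q)+ε}·E(M¹ ∩ B_{2q}^{α,β}, P_n)_{w_{α,β}, q} = ∞. -/

import Mathlib

open MeasureTheory Set Filter
open scoped ENNReal

noncomputable section

/-- The Jacobi weight `w_{α,β}(x) = (1+x)^α (1-x)^β`. -/
def jacobi (α β : ℝ) (x : ℝ) : ℝ := (1 + x) ^ α * (1 - x) ^ β

/-- `φ(x) = √(1-x²)`. -/
def phiW (x : ℝ) : ℝ := Real.sqrt (1 - x ^ 2)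

/-- The `L^p` norm of `g` on the interval `[a,b]` (essential sup when `p = ∞`). -/
def LpOn (g : ℝ → ℝ) (p : ℝ≥0∞) (a b : ℝ) : ℝ≥0∞ :=
  eLpNorm g p (volume.restrict (Icc a b))

/-- The `k`-th symmetric difference `Δ_h^k(f,x)` relative to `[-1,1]`. -/
def symmDelta (k : ℕ) (h : ℝ) (f : ℝ → ℝ) (x : ℝ) : ℝ :=
  if (x - k * h / 2 ∈ Icc (-1 : ℝ) 1 ∧ x + k * h / 2 ∈ Icc (-1 : ℝ) 1) then
    ∑ i ∈ Finset.range (k + 1), ((k.choose i : ℝ) * (-1 : ℝ) ^ (k - i) * f (x - k * h / 2 + i * h))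
  else 0

/-- Main-part weighted modulus `Ω_φ^k(f,δ)_{w,p}`. -/
def OmegaMain (k : ℕ) (f : ℝ → ℝ) (δ : ℝ) (wt : ℝ → ℝ) (p : ℝ≥0∞) : ℝ≥0∞ :=
  ⨆ h ∈ Ioc (0 : ℝ) δ,
    LpOn (fun x => wt x * symmDelta k (h * phiW x) f x) p
      (-1 + 2 * (k : ℝ) ^ 2 * h ^ 2) (1 - 2 * (k : ℝ) ^ 2 * h ^ 2)

/-- Forward part `Ω→_φ^k(f,δ)_{w,p}`. -/
def OmegaFwd (k : ℕ) (f : ℝ → ℝ) (δ : ℝ) (wt : ℝ → ℝ) (p : ℝ≥0∞) : ℝ≥0∞ :=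
  ⨆ h ∈ Ioc (0 : ℝ) (2 * (k : ℝ) ^ 2 * δ ^ 2),
    LpOn (fun x => wt x * symmDelta k h f (x + k * h / 2)) p
      (-1) (-1 + 2 * (k : ℝ) ^ 2 * δ ^ 2)

/-- Backward part `Ω←_φ^k(f,δ)_{w,p}`. -/
def OmegaBwd (k : ℕ) (f : ℝ → ℝ) (δ : ℝ) (wt : ℝ → ℝ) (p : ℝ≥0∞) : ℝ≥0∞ :=
  ⨆ h ∈ Ioc (0 : ℝ) (2 * (k : ℝ) ^ 2 * δ ^ 2),
    LpOn (fun x => wt x * symmDelta k h f (x - k * h / 2)) p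
      (1 - 2 * (k : ℝ) ^ 2 * δ ^ 2) 1

/-- Weighted Ditzian–Totik modulus `ω_φ^k(f,δ)_{w,p}`. -/
def omegaDT (k : ℕ) (f : ℝ → ℝ) (δ : ℝ) (wt : ℝ → ℝ) (p : ℝ≥0∞) : ℝ≥0∞ :=
  OmegaMain k f δ wt p + OmegaFwd k f δ wt p + OmegaBwd k f δ wt p

/-- `f` is `k`-monotone on `(-1,1)`: all `k`-th divided differences over `k+1` distinct
points of `(-1,1)` are nonnegative. -/
def kMonotoneOn (k : ℕ) (f : ℝ → ℝ) : Prop :=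
  ∀ x : Fin (k + 1) → ℝ, Function.Injective x → (∀ i, x i ∈ Ioo (-1 : ℝ) 1) →
    0 ≤ ∑ i, f (x i) / ∏ j ∈ Finset.univ.erase i, (x i - x j)

/-- `M^k`, the class of `k`-monotone functions on `(-1,1)`. -/
def MSet (k : ℕ) : Set (ℝ → ℝ) := {f | kMonotoneOn k f}

/-- `M_+^k`, the `k`-monotone functions on `(-1,1)` vanishing on `(-1,0]`. -/
def MPlus (k : ℕ) : Set (ℝ → ℝ) :=
  {f | kMonotoneOn k f ∧ ∀ x : ℝ, -1 < x → x ≤ 0 → f x = 0}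

/-- `J_p = (-1/p, ∞)` for finite `p`, `[0,∞)` for `p = ∞`. -/
def Jset (p : ℝ≥0∞) : Set ℝ := if p = ∞ then Ici 0 else Ioi (-1 / p.toReal)

/-- `W_p^{α,β}`. -/
def WSet (p : ℝ≥0∞) (α β : ℝ) : Set (ℝ → ℝ) :=
  {f | Measurable f ∧ LpOn (fun x => jacobi α β x * f x) p (-1) 1 ≠ ⊤}

/-- `B_p^{α,β}`, the unit sphere of `W_p^{α,β}`. -/
def BSet (p : ℝ≥0∞) (α β : ℝ) : Set (ℝ → ℝ) :=
  {f | Measurable f ∧ LpOn (fun x => jacobi α β x * f x) p (-1) 1 = 1}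

/-- Best weighted approximation `E_n(f)_{w,q}` by polynomials of degree at most `n`. -/
def En (n : ℕ) (f : ℝ → ℝ) (wt : ℝ → ℝ) (q : ℝ≥0∞) : ℝ≥0∞ :=
  ⨅ P ∈ {P : Polynomial ℝ | P.natDegree ≤ n},
    LpOn (fun x => wt x * (f x - P.eval x)) q (-1) 1

/-- `E(X, P_n)_{w,q}`. -/
def EClass (X : Set (ℝ → ℝ)) (n : ℕ) (wt : ℝ → ℝ) (q : ℝ≥0∞) : ℝ≥0∞ :=
  ⨆ f ∈ X, En n f wt q

/-!
Fix `K` and put `N = 25 ^ K`. The extremal function is a step function `f` with jumps at the `K`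
nodes `cos (π / 2 * 5 ^ (-(j + 1)))`, which accumulate geometrically at the endpoint `1`, and with
heights chosen so that every jump contributes the same amount to `‖w f‖_{2q} ^ (2q)`; hence
`‖w f‖_{2q} ≲ K ^ (1 / (2q))`.

The error of approximation is bounded below by duality. The derivative of `sin (m θ) R(cos θ)` is
orthogonal on `[0, π]` to every `P(cos θ)` with `deg P + deg R + 1 < m`, while its pairing with the
step `1_{[cos φ, 1]}` is `sin (m φ) R(cos φ)`. The nodes are Chebyshev zeros of degree `N`, so `R`
can be a sum of high powers of fundamental Lagrange polynomials, each localised at one node and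
scaled so that the `K` jumps again contribute equally: the pairing with `f` is `≳ K`, and the dual
norm is `≲ K ^ (1 - 1 / q) N ^ (1 / q)`. By Hölder, `E_N(f) ≳ (K / N) ^ (1 / q)`; normalising `f`
leaves `K ^ (1 / (2q)) N ^ (-1 / q)`, and `K` is of order `log N`.
-/

section

open Real Polynomial

section Trigonometry

theorem integral_cos_pow_mul_cos_nat_mul (d : ℕ) :
    ∀ m : ℕ, d < m → ∫ θ in (0 : ℝ)..π, cos θ ^ d * cos (m * θ) = 0 := by
  induction d with
  | zero =>
    intro m hm
    have hm' : (m : ℝ) ≠ 0 := by positivity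
    simp [intervalIntegral.integral_comp_mul_left cos hm', sin_nat_mul_pi]
  | succ d ih =>
    intro m hm
    have product_to_sum (θ : ℝ) : cos θ ^ (d + 1) * cos (m * θ)
        = 1 / 2 * (cos θ ^ d * cos ((m + 1 : ℕ) * θ))
          + 1 / 2 * (cos θ ^ d * cos ((m - 1 : ℕ) * θ)) := by
      rw [Nat.cast_succ, Nat.cast_pred (by lia), add_one_mul, sub_one_mul, cos_add, cos_sub]
      ring
    simp_rw [product_to_sum]
    rw [intervalIntegral.integral_add, intervalIntegral.integral_const_mul,
      intervalIntegral.integral_const_mul, ih _ (by lia), ih _ (by lia)]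
    · simp
    all_goals exact Continuous.intervalIntegrable (by fun_prop) _ _

theorem integral_eval_cos_mul_cos_nat_mul {S : ℝ[X]} {m : ℕ} (h : S.natDegree < m) :
    ∫ θ in (0 : ℝ)..π, S.eval (cos θ) * cos (m * θ) = 0 := by
  simp_rw [eval_eq_sum_range, Finset.sum_mul, mul_assoc]
  rw [intervalIntegral.integral_finsetSum
    fun i _ => Continuous.intervalIntegrable (by fun_prop) _ _]
  refine Finset.sum_eq_zero fun i hi => ?_
  rw [intervalIntegral.integral_const_mul, integral_cos_pow_mul_cos_nat_mul i m (by grind),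
    mul_zero]

theorem integral_eval_cos_mul_sin_nat_mul_mul_sin {S : ℝ[X]} {m : ℕ} (h : S.natDegree + 1 < m) :
    ∫ θ in (0 : ℝ)..π, S.eval (cos θ) * (sin (m * θ) * sin θ) = 0 := by
  have product_to_sum (θ : ℝ) : S.eval (cos θ) * (sin (m * θ) * sin θ)
      = 1 / 2 * (S.eval (cos θ) * cos ((m - 1 : ℕ) * θ))
        - 1 / 2 * (S.eval (cos θ) * cos ((m + 1 : ℕ) * θ)) := by
    rw [Nat.cast_succ, Nat.cast_pred (by lia), add_one_mul, sub_one_mul, cos_add, cos_sub]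
    ring
  simp_rw [product_to_sum]
  rw [intervalIntegral.integral_sub, intervalIntegral.integral_const_mul,
    intervalIntegral.integral_const_mul, integral_eval_cos_mul_cos_nat_mul (by lia),
    integral_eval_cos_mul_cos_nat_mul (by lia)]
  · simp
  all_goals exact Continuous.intervalIntegrable (by fun_prop) _ _

theorem abs_sin_nat_mul_le (m : ℕ) (θ : ℝ) : |sin (m * θ)| ≤ m * |sin θ| := by
  induction m with
  | zero => simp
  | succ m ih =>
    rw [Nat.cast_succ, add_one_mul, sin_add]
    calc |sin (m * θ) * cos θ + cos (m * θ) * sin θ|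
        ≤ |sin (m * θ)| * |cos θ| + |cos (m * θ)| * |sin θ| := by
          simpa only [abs_mul] using abs_add_le (sin (m * θ) * cos θ) (cos (m * θ) * sin θ)
      _ ≤ m * |sin θ| * 1 + 1 * |sin θ| := by
          gcongr
          · exact abs_cos_le_one _
          · exact abs_cos_le_one _
      _ = (m + 1) * |sin θ| := by ring

theorem hasDerivAt_eval_cos (R : ℝ[X]) (θ : ℝ) :
    HasDerivAt (fun θ => R.eval (cos θ)) (R.derivative.eval (cos θ) * -sin θ) θ :=
  (R.hasDerivAt (cos θ)).comp θ (hasDerivAt_cos θ)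

end Trigonometry

section OscillatingTest

/-- The derivative of `θ ↦ sin (m θ) R(cos θ)`. As a function of `x = cos θ` it annihilates
polynomials of low degree, while its integral against a step at `cos φ` is `sin (m φ) R(cos φ)`. -/
def oscillatingTest (m : ℕ) (R : ℝ[X]) (θ : ℝ) : ℝ :=
  m * cos (m * θ) * R.eval (cos θ) - sin (m * θ) * sin θ * R.derivative.eval (cos θ)

@[fun_prop]
theorem continuous_oscillatingTest (m : ℕ) (R : ℝ[X]) : Continuous (oscillatingTest m R) := by
  unfold oscillatingTest
  fun_prop

theorem hasDerivAt_sin_nat_mul_mul_eval_cos (m : ℕ) (R : ℝ[X]) (θ : ℝ) :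
    HasDerivAt (fun θ => sin (m * θ) * R.eval (cos θ)) (oscillatingTest m R θ) θ := by
  have hsin : HasDerivAt (fun θ : ℝ => sin (m * θ)) (cos (m * θ) * m) θ := by
    simpa using ((hasDerivAt_id θ).const_mul (m : ℝ)).sin
  refine (hsin.mul (hasDerivAt_eval_cos R θ)).congr_deriv ?_
  rw [oscillatingTest]
  ring

theorem oscillatingTest_sum {ι : Type*} (s : Finset ι) (m : ℕ) (a : ι → ℝ) (R : ι → ℝ[X])
    (θ : ℝ) :
    oscillatingTest m (∑ i ∈ s, C (a i) * R i) θ = ∑ i ∈ s, a i * oscillatingTest m (R i) θ := by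
  simp only [oscillatingTest, eval_finsetSum, derivative_sum, derivative_C_mul, eval_mul, eval_C,
    Finset.mul_sum, mul_sub, Finset.sum_sub_distrib]
  congr 1 <;> exact Finset.sum_congr rfl fun i _ => by ring

theorem integral_eval_cos_mul_oscillatingTest {m : ℕ} {P R : ℝ[X]}
    (h : P.natDegree + R.natDegree + 1 < m) :
    ∫ θ in (0 : ℝ)..π, P.eval (cos θ) * oscillatingTest m R θ = 0 := by
  have expand (θ : ℝ) : P.eval (cos θ) * oscillatingTest m R θ
      = m * ((P * R).eval (cos θ) * cos (m * θ))
        - (P * R.derivative).eval (cos θ) * (sin (m * θ) * sin θ) := by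
    simp only [oscillatingTest, eval_mul]
    ring
  have hPR : (P * R).natDegree < m := natDegree_mul_le.trans_lt (by lia)
  have hPR' : (P * R.derivative).natDegree + 1 < m := by
    have := natDegree_derivative_le R
    have := natDegree_mul_le (p := P) (q := R.derivative)
    lia
  simp_rw [expand]
  rw [intervalIntegral.integral_sub, intervalIntegral.integral_const_mul,
    integral_eval_cos_mul_cos_nat_mul hPR, integral_eval_cos_mul_sin_nat_mul_mul_sin hPR']
  · simp
  all_goals exact Continuous.intervalIntegrable (by fun_prop) _ _

theorem integral_oscillatingTest (m : ℕ) (R : ℝ[X]) (φ : ℝ) :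
    ∫ θ in (0 : ℝ)..φ, oscillatingTest m R θ = sin (m * φ) * R.eval (cos φ) := by
  rw [intervalIntegral.integral_eq_sub_of_hasDerivAt
    (fun θ _ => hasDerivAt_sin_nat_mul_mul_eval_cos m R θ)
    ((continuous_oscillatingTest m R).intervalIntegrable _ _)]
  simp

theorem oscillatingTest_pow_mul_one_sub_sq_pow (m e s : ℕ) (Q : ℝ[X]) (θ : ℝ) :
    oscillatingTest m (Q ^ (e + 1) * (1 - X ^ 2) ^ (s + 1)) θ
      = Q.eval (cos θ) ^ e *
        (m * cos (m * θ) * Q.eval (cos θ) * (1 - cos θ ^ 2) ^ (s + 1)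
          - sin (m * θ) * (e + 1) * (sin θ * Q.derivative.eval (cos θ)) * (1 - cos θ ^ 2) ^ (s + 1)
          + sin (m * θ) * sin θ * (2 * (s + 1)) * cos θ * Q.eval (cos θ)
            * (1 - cos θ ^ 2) ^ s) := by
  simp only [oscillatingTest, derivative_mul, derivative_pow_succ, derivative_sub, derivative_one,
    derivative_X, eval_mul, eval_add, eval_pow, eval_sub, eval_one, eval_X, eval_zero,
    Nat.cast_one, map_add, map_one, map_natCast, eval_natCast]
  ring

theorem abs_oscillatingTest_pow_mul_one_sub_sq_pow_le {Q : ℝ[X]} {θ A B : ℝ}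
    (hA : |Q.eval (cos θ)| ≤ A) (hB : |sin θ * Q.derivative.eval (cos θ)| ≤ B) (m e s : ℕ) :
    |oscillatingTest m (Q ^ (e + 1) * (1 - X ^ 2) ^ (s + 1)) θ|
      ≤ (A * m + (e + 1) * B + 2 * (s + 1) * A * m)
        * (|Q.eval (cos θ)| ^ e * (1 - cos θ ^ 2) ^ (s + 1)) := by
  have : 0 ≤ A := (abs_nonneg _).trans hA
  have hsin_sq : 1 - cos θ ^ 2 = |sin θ| ^ 2 := by rw [sq_abs, sin_sq]
  have hcos : |cos (m * θ)| ≤ 1 := abs_cos_le_one _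
  rw [oscillatingTest_pow_mul_one_sub_sq_pow, hsin_sq, abs_mul, abs_pow]
  set l := Q.eval (cos θ)
  set l' := Q.derivative.eval (cos θ)
  set v := |sin θ|
  have bound_cos : |m * cos (m * θ) * l * (v ^ 2) ^ (s + 1)| ≤ A * m * (v ^ 2) ^ (s + 1) := by
    simp only [abs_mul, abs_pow, abs_abs, Nat.abs_cast, v]
    calc m * |cos (m * θ)| * |l| * (|sin θ| ^ 2) ^ (s + 1)
        ≤ m * 1 * A * (|sin θ| ^ 2) ^ (s + 1) := by gcongr
      _ = _ := by ring
  have bound_deriv : |sin (m * θ) * (e + 1) * (sin θ * l') * (v ^ 2) ^ (s + 1)|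
      ≤ (e + 1) * B * (v ^ 2) ^ (s + 1) := by
    rw [abs_mul, abs_mul, abs_mul, abs_of_nonneg (by positivity : (0 : ℝ) ≤ (v ^ 2) ^ (s + 1)),
      abs_of_nonneg (by positivity : (0 : ℝ) ≤ e + 1)]
    gcongr
    exact mul_le_of_le_one_left (by positivity) (abs_sin_le_one _)
  have bound_weight : |sin (m * θ) * sin θ * (2 * (s + 1)) * cos θ * l * (v ^ 2) ^ s|
      ≤ 2 * (s + 1) * A * m * (v ^ 2) ^ (s + 1) := by
    simp only [abs_mul, abs_pow, abs_abs, abs_two, v,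
      abs_of_nonneg (by positivity : (0 : ℝ) ≤ s + 1)]
    calc |sin (m * θ)| * |sin θ| * (2 * (s + 1)) * |cos θ| * |l| * (|sin θ| ^ 2) ^ s
        ≤ m * |sin θ| * |sin θ| * (2 * (s + 1)) * 1 * A * (|sin θ| ^ 2) ^ s := by
          gcongr
          · exact abs_sin_nat_mul_le m θ
          · exact abs_cos_le_one θ
      _ = _ := by ring
  have triangle := (abs_add_le _ _).trans
    (add_le_add ((abs_sub _ _).trans (add_le_add bound_cos bound_deriv)) bound_weight)
  calc _ ≤ _ := mul_le_mul_of_nonneg_left triangle (by positivity : 0 ≤ |l| ^ e)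
    _ = _ := by ring

end OscillatingTest

section ChebyshevLagrange

/-- The Lagrange fundamental polynomial at the Chebyshev zero `cos φ` of `T_N`, written as a
Christoffel–Darboux kernel; it has this interpolation property only if `cos (N φ) = 0`. -/
def chebLagrange (N : ℕ) (φ : ℝ) : ℝ[X] :=
  C (N : ℝ)⁻¹ * (C 2 * (∑ k ∈ Finset.range N, C (cos (k * φ)) * Chebyshev.T ℝ k) - 1)

theorem natDegree_chebLagrange_le (N : ℕ) (φ : ℝ) : (chebLagrange N φ).natDegree ≤ N := by
  have hsum : (∑ k ∈ Finset.range N, C (cos (k * φ)) * Chebyshev.T ℝ k).natDegree ≤ N := by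
    refine natDegree_sum_le_of_forall_le _ _ fun k hk => (natDegree_C_mul_le _ _).trans ?_
    rw [Chebyshev.natDegree_T]
    simpa using (Finset.mem_range.1 hk).le
  refine (natDegree_C_mul_le _ _).trans ((natDegree_sub_le _ _).trans ?_)
  simpa using (natDegree_C_mul_le _ _).trans hsum

theorem eval_chebLagrange_cos (N : ℕ) (φ θ : ℝ) :
    (chebLagrange N φ).eval (cos θ)
      = (N : ℝ)⁻¹ * (2 * (∑ k ∈ Finset.range N, cos (k * φ) * cos (k * θ)) - 1) := by
  simp only [chebLagrange, eval_mul, eval_C, eval_sub, eval_finsetSum, eval_one,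
    Chebyshev.T_real_cos, Int.cast_natCast]

theorem neg_sin_mul_eval_derivative_chebLagrange_cos (N : ℕ) (φ θ : ℝ) :
    (chebLagrange N φ).derivative.eval (cos θ) * -sin θ
      = (N : ℝ)⁻¹ * (2 * ∑ k ∈ Finset.range N, cos (k * φ) * (-sin (k * θ) * k)) := by
  refine (hasDerivAt_eval_cos _ θ).unique ?_
  simp_rw [eval_chebLagrange_cos]
  refine (((HasDerivAt.fun_sum fun k _ => ?_).const_mul _).sub_const _).const_mul _
  simpa using (((hasDerivAt_id θ).const_mul (k : ℝ)).cos).const_mul (cos (k * φ))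

variable {N : ℕ}

theorem abs_eval_chebLagrange_cos_le (hN : 0 < N) (φ θ : ℝ) :
    |(chebLagrange N φ).eval (cos θ)| ≤ 3 := by
  have hN1 : (1 : ℝ) ≤ N := by exact_mod_cast hN
  have hsum : |∑ k ∈ Finset.range N, cos (k * φ) * cos (k * θ)| ≤ N := by
    refine (Finset.abs_sum_le_sum_abs _ _).trans
      ((Finset.sum_le_card_nsmul _ _ 1 fun k _ => ?_).trans (by simp))
    rw [abs_mul]
    exact mul_le_one₀ (abs_cos_le_one _) (abs_nonneg _) (abs_cos_le_one _)
  rw [eval_chebLagrange_cos, abs_mul, abs_of_nonneg (by positivity),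
    inv_mul_le_iff₀ (by positivity)]
  rw [abs_le] at hsum ⊢
  constructor <;> linarith

theorem abs_sin_mul_eval_derivative_chebLagrange_cos_le (hN : 0 < N) (φ θ : ℝ) :
    |sin θ * (chebLagrange N φ).derivative.eval (cos θ)| ≤ 2 * N := by
  have hterm (k : ℕ) (hk : k ∈ Finset.range N) : |cos (k * φ) * (-sin (k * θ) * k)| ≤ N := by
    have hkN : (k : ℝ) ≤ N := by exact_mod_cast (Finset.mem_range.1 hk).le
    rw [abs_mul, abs_mul, abs_neg, Nat.abs_cast]
    calc |cos (k * φ)| * (|sin (k * θ)| * k) ≤ 1 * (1 * N) := by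
          gcongr
          · exact abs_cos_le_one _
          · exact abs_sin_le_one _
      _ = N := by ring
  have hsum : |∑ k ∈ Finset.range N, cos (k * φ) * (-sin (k * θ) * k)| ≤ N * N :=
    (Finset.abs_sum_le_sum_abs _ _).trans ((Finset.sum_le_card_nsmul _ _ _ hterm).trans (by simp))
  rw [mul_comm, ← abs_neg, ← mul_neg, neg_sin_mul_eval_derivative_chebLagrange_cos, abs_mul,
    abs_of_nonneg (by positivity), inv_mul_le_iff₀ (by positivity), abs_mul, abs_two]
  linarith

theorem christoffel_darboux_cos (φ θ : ℝ) (N : ℕ) :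
    (cos θ - cos φ) * (2 * (∑ k ∈ Finset.range N, cos (k * φ) * cos (k * θ)) - 1)
      = cos (N * θ) * cos (N * φ - φ) - cos (N * θ - θ) * cos (N * φ) := by
  induction N with
  | zero => simp
  | succ N ih =>
    rw [Finset.sum_range_succ, mul_add, add_sub_right_comm, mul_add, ih, Nat.cast_succ,
      add_one_mul, add_one_mul, add_sub_cancel_right, add_sub_cancel_right, cos_add, cos_add,
      cos_sub, cos_sub]
    ring

theorem christoffel_darboux_cos_self (φ : ℝ) (N : ℕ) :
    sin φ * (2 * (∑ k ∈ Finset.range N, cos (k * φ) * cos (k * φ)) - 1 - N)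
      = sin (N * φ) * cos (N * φ - φ) - sin φ := by
  induction N with
  | zero => simp
  | succ N ih =>
    rw [Finset.sum_range_succ, Nat.cast_succ, add_one_mul, add_sub_cancel_right, sin_add]
    rw [cos_sub] at ih
    linear_combination ih + sin φ * sin_sq_add_cos_sq (N * φ)

theorem abs_sub_mul_abs_eval_chebLagrange_cos_le {φ : ℝ} (hφ : cos (N * φ) = 0) (θ : ℝ) :
    |cos θ - cos φ| * |(chebLagrange N φ).eval (cos θ)| ≤ |sin φ| / N := by
  have hCD : |(cos θ - cos φ) * (2 * (∑ k ∈ Finset.range N, cos (k * φ) * cos (k * θ)) - 1)|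
      ≤ |sin φ| := by
    rw [christoffel_darboux_cos, hφ, cos_sub, hφ, zero_mul, zero_add, mul_zero, sub_zero, abs_mul,
      abs_mul, ← mul_assoc]
    exact mul_le_of_le_one_left (abs_nonneg _)
      (mul_le_one₀ (abs_cos_le_one _) (abs_nonneg _) (abs_sin_le_one _))
  rw [← abs_mul, eval_chebLagrange_cos, mul_left_comm, abs_mul, abs_of_nonneg (by positivity),
    inv_mul_eq_div]
  gcongr

theorem eval_chebLagrange_cos_self (hN : 0 < N) {φ : ℝ} (hφ : cos (N * φ) = 0)
    (hsin : sin φ ≠ 0) : (chebLagrange N φ).eval (cos φ) = 1 := by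
  have hself := christoffel_darboux_cos_self φ N
  have hpyth := sin_sq_add_cos_sq (N * φ)
  rw [cos_sub, hφ] at hself
  rw [hφ] at hpyth
  have hprod : sin φ * (2 * (∑ k ∈ Finset.range N, cos (k * φ) * cos (k * φ)) - 1 - N) = 0 := by
    linear_combination hself + sin φ * hpyth
  rw [eval_chebLagrange_cos, sub_eq_zero.1 ((mul_eq_zero.1 hprod).resolve_left hsin)]
  field_simp

end ChebyshevLagrange

section StepSum

/-- The step function with a jump of height `h j` at each point `t j`. -/
def stepSum {ι : Type*} (s : Finset ι) (h t : ι → ℝ) (x : ℝ) : ℝ :=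
  ∑ j ∈ s, (Ici (t j)).indicator (fun _ => h j) x

variable {ι : Type*} (s : Finset ι) (h t : ι → ℝ)

@[fun_prop]
theorem measurable_stepSum : Measurable (stepSum s h t) :=
  Finset.measurable_fun_sum _ fun _ _ => measurable_const.indicator measurableSet_Ici

variable {s h} in
theorem monotone_stepSum (hh : ∀ j ∈ s, 0 ≤ h j) : Monotone (stepSum s h t) := by
  refine fun x y hxy => Finset.sum_le_sum fun j hj => ?_
  by_cases hx : t j ≤ x
  · simp [hx, hx.trans hxy]
  · simpa [hx] using indicator_nonneg (fun _ _ => hh j hj) y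

variable {s h} in
theorem stepSum_nonneg (hh : ∀ j ∈ s, 0 ≤ h j) (x : ℝ) : 0 ≤ stepSum s h t x :=
  Finset.sum_nonneg fun j hj => indicator_nonneg (fun _ _ => hh j hj) x

end StepSum

section Duality

/-- The dual function whose pairing with `w f` is `∫ f(x) oscillatingTest m R (arccos x)` against
the Chebyshev measure `dx / √(1 - x ^ 2)`. -/
def dualTest (w : ℝ → ℝ) (m : ℕ) (R : ℝ[X]) (x : ℝ) : ℝ :=
  oscillatingTest m R (arccos x) * √(1 - x ^ 2)⁻¹ / w x

theorem dualTest_sum {ι : Type*} (s : Finset ι) (w : ℝ → ℝ) (m : ℕ) (a : ι → ℝ) (R : ι → ℝ[X])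
    (x : ℝ) : dualTest w m (∑ i ∈ s, C (a i) * R i) x = ∑ i ∈ s, a i * dualTest w m (R i) x := by
  simp only [dualTest, oscillatingTest_sum, Finset.sum_mul, Finset.sum_div, mul_assoc,
    mul_div_assoc]

open Polynomial.Chebyshev (measureT integrable_measureT integral_measureT
  integral_measureT_eq_integral_cos)

theorem integrable_oscillatingTest_arccos (m : ℕ) (R : ℝ[X]) :
    Integrable (fun x => oscillatingTest m R (arccos x)) measureT :=
  integrable_measureT (by fun_prop)

theorem integral_eval_mul_oscillatingTest_arccos {m : ℕ} {P R : ℝ[X]}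
    (h : P.natDegree + R.natDegree + 1 < m) :
    ∫ x, P.eval x * oscillatingTest m R (arccos x) ∂measureT = 0 := by
  rw [integral_measureT_eq_integral_cos]
  refine (intervalIntegral.integral_congr fun θ hθ => ?_).trans
    (integral_eval_cos_mul_oscillatingTest h)
  rw [uIcc_of_le pi_pos.le] at hθ
  simp only [arccos_cos hθ.1 hθ.2]

theorem integral_indicator_Ici_mul_oscillatingTest_arccos (m : ℕ) (R : ℝ[X]) (c : ℝ) {φ : ℝ}
    (hφ : φ ∈ Icc 0 π) :
    ∫ x, (Ici (cos φ)).indicator (fun _ => c) x * oscillatingTest m R (arccos x) ∂measureT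
      = c * (sin (m * φ) * R.eval (cos φ)) := by
  rw [integral_measureT_eq_integral_cos, ← integral_oscillatingTest,
    ← intervalIntegral.integral_const_mul, intervalIntegral.integral_of_le pi_pos.le,
    intervalIntegral.integral_of_le hφ.1, ← inter_eq_right.2 (Ioc_subset_Ioc_right hφ.2),
    ← setIntegral_indicator measurableSet_Ioc]
  refine setIntegral_congr_fun measurableSet_Ioc fun θ hθ => ?_
  have hcos : cos φ ≤ cos θ ↔ θ ≤ φ :=
    strictAntiOn_cos.le_iff_ge hφ ⟨hθ.1.le, hθ.2⟩
  simp only [indicator_apply, mem_Ici, hcos, mem_Ioc, hθ.1, true_and,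
    arccos_cos hθ.1.le hθ.2, ite_mul, zero_mul]

theorem integral_stepSum_sub_eval_mul_oscillatingTest_arccos {ι : Type*} {s : Finset ι}
    (h : ι → ℝ) {φ : ι → ℝ} (hφ : ∀ j ∈ s, φ j ∈ Icc 0 π) {m : ℕ} {P R : ℝ[X]}
    (hdeg : P.natDegree + R.natDegree + 1 < m) :
    ∫ x, (stepSum s h (cos ∘ φ) x - P.eval x) * oscillatingTest m R (arccos x) ∂measureT
      = ∑ j ∈ s, h j * (sin (m * φ j) * R.eval (cos (φ j))) := by
  have hstep (j : ι) : Integrable (fun x => (Ici (cos (φ j))).indicator (fun _ => h j) x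
      * oscillatingTest m R (arccos x)) measureT :=
    (((integrable_oscillatingTest_arccos m R).const_mul (h j)).indicator measurableSet_Ici).congr
      (ae_of_all _ fun _ => indicator_mul_left _ _ _)
  have hpoly : Integrable (fun x => P.eval x * oscillatingTest m R (arccos x)) measureT :=
    integrable_measureT (by fun_prop)
  simp only [stepSum, sub_mul, Finset.sum_mul, Function.comp_apply]
  rw [integral_sub (integrable_finsetSum _ fun j _ => hstep j) hpoly,
    integral_eval_mul_oscillatingTest_arccos hdeg, sub_zero,
    integral_finsetSum _ fun j _ => hstep j]
  exact Finset.sum_congr rfl fun j hj =>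
    integral_indicator_Ici_mul_oscillatingTest_arccos m R (h j) (hφ j hj)

theorem ofReal_integral_mul_le_LpOn_mul_LpOn {a b : ℝ} (hab : a ≤ b) {p q : ℝ≥0∞}
    [p.HolderConjugate q] {w f g : ℝ → ℝ} (hw : Measurable w) (hw0 : ∀ x ∈ Ioo a b, w x ≠ 0)
    (hf : Measurable f) (hg : Measurable g) :
    ENNReal.ofReal (∫ x in a..b, f x * g x)
      ≤ LpOn (fun x => w x * f x) p a b * LpOn (fun x => g x / w x) q a b := by
  rw [intervalIntegral.integral_of_le hab, ← integral_Icc_eq_integral_Ioc]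
  have split : ∀ᵐ x ∂volume.restrict (Icc a b), ‖f x * g x‖ₑ = ‖w x * f x * (g x / w x)‖ₑ := by
    rw [← restrict_Ioo_eq_restrict_Icc]
    filter_upwards [ae_restrict_mem measurableSet_Ioo] with x hx
    have := hw0 x hx
    congr 1
    field_simp
  calc ENNReal.ofReal (∫ x in Icc a b, f x * g x)
      ≤ ‖∫ x in Icc a b, f x * g x‖ₑ := ofReal_le_enorm _
    _ ≤ ∫⁻ x in Icc a b, ‖f x * g x‖ₑ := enorm_integral_le_lintegral_enorm _
    _ = eLpNorm ((fun x => w x * f x) • fun x => g x / w x) 1 (volume.restrict (Icc a b)) := by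
        rw [eLpNorm_one_eq_lintegral_enorm]
        exact lintegral_congr_ae split
    _ ≤ _ := eLpNorm_smul_le_mul_eLpNorm (hg.div hw).aestronglyMeasurable (by fun_prop)

theorem ofReal_sum_div_LpOn_le_En_stepSum {ι : Type*} {s : Finset ι} (h : ι → ℝ) {φ : ι → ℝ}
    (hφ : ∀ j ∈ s, φ j ∈ Icc 0 π) {p q : ℝ≥0∞} [p.HolderConjugate q] {w : ℝ → ℝ}
    (hw : Measurable w) (hw0 : ∀ x ∈ Ioo (-1 : ℝ) 1, w x ≠ 0) {n m : ℕ} {R : ℝ[X]}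
    (hdeg : n + R.natDegree + 1 < m) :
    ENNReal.ofReal (∑ j ∈ s, h j * (sin (m * φ j) * R.eval (cos (φ j))))
        / LpOn (dualTest w m R) q (-1) 1
      ≤ En n (stepSum s h (cos ∘ φ)) w p := by
  refine le_iInf₂ fun P (hP : P.natDegree ≤ n) => ENNReal.div_le_of_le_mul ?_
  rw [← integral_stepSum_sub_eval_mul_oscillatingTest_arccos h hφ
    (show P.natDegree + R.natDegree + 1 < m by lia), integral_measureT]
  simp_rw [mul_assoc]
  exact ofReal_integral_mul_le_LpOn_mul_LpOn (by norm_num) hw hw0 (by fun_prop) (by fun_prop)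

end Duality

section Jacobi

theorem jacobi_pos (α β : ℝ) {x : ℝ} (hx : x ∈ Ioo (-1 : ℝ) 1) : 0 < jacobi α β x :=
  mul_pos (rpow_pos_of_pos (by linarith [hx.1]) α) (rpow_pos_of_pos (by linarith [hx.2]) β)

@[fun_prop]
theorem measurable_jacobi (α β : ℝ) : Measurable (jacobi α β) := by
  unfold jacobi
  fun_prop

theorem pow_le_two_rpow_mul_rpow {u a : ℝ} {s : ℕ} (has : a ≤ s) (hu0 : 0 < u) (hu2 : u ≤ 2) :
    u ^ s ≤ 2 ^ (s - a) * u ^ a :=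
  calc u ^ s = u ^ (s - a) * u ^ a := by rw [← rpow_add hu0, sub_add_cancel, rpow_natCast]
    _ ≤ 2 ^ (s - a) * u ^ a := by
      gcongr

theorem one_sub_sq_pow_le_jacobi {α β : ℝ} {s : ℕ} (hα : α ≤ s) (hβ : β ≤ s) {x : ℝ}
    (hx : x ∈ Ioo (-1 : ℝ) 1) :
    (1 - x ^ 2) ^ s ≤ 2 ^ (s - α) * 2 ^ (s - β) * jacobi α β x := by
  have hplus : 0 < 1 + x := by linarith [hx.1]
  have hminus : 0 < 1 - x := by linarith [hx.2]
  calc (1 - x ^ 2) ^ s = (1 + x) ^ s * (1 - x) ^ s := by rw [← mul_pow]; ring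
    _ ≤ (2 ^ (s - α) * (1 + x) ^ α) * (2 ^ (s - β) * (1 - x) ^ β) := by
      gcongr
      · exact pow_le_two_rpow_mul_rpow hα hplus (by linarith)
      · exact pow_le_two_rpow_mul_rpow hβ hminus (by linarith)
    _ = _ := by rw [jacobi]; ring

theorem one_sub_sq_pow_succ_mul_le_jacobi {α β : ℝ} {s : ℕ} (hα : α ≤ s) (hβ : β ≤ s) {x : ℝ}
    (hx : x ∈ Ioo (-1 : ℝ) 1) :
    (1 - x ^ 2) ^ (s + 1) * √(1 - x ^ 2)⁻¹ ≤ 2 ^ (s - α) * 2 ^ (s - β) * jacobi α β x := by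
  have hpos : 0 < 1 - x ^ 2 := by nlinarith [hx.1, hx.2]
  have hle : 1 - x ^ 2 ≤ 1 := by linarith [sq_nonneg x]
  have hsqrt : (1 - x ^ 2) * √(1 - x ^ 2)⁻¹ ≤ 1 := by
    rw [sqrt_inv, ← div_eq_mul_inv, div_sqrt]
    exact sqrt_le_one.2 hle
  calc (1 - x ^ 2) ^ (s + 1) * √(1 - x ^ 2)⁻¹
      = (1 - x ^ 2) ^ s * ((1 - x ^ 2) * √(1 - x ^ 2)⁻¹) := by ring
    _ ≤ (1 - x ^ 2) ^ s := mul_le_of_le_one_right (by positivity) hsqrt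
    _ ≤ _ := one_sub_sq_pow_le_jacobi hα hβ hx

end Jacobi

section RpowComparison

variable {b t y : ℝ}

theorem rpow_le_rpow_abs_mul_rpow (hb : 1 ≤ b) (hy : 0 < y) (hlo : b⁻¹ * y ≤ t) (hhi : t ≤ b * y)
    (r : ℝ) : t ^ r ≤ b ^ |r| * y ^ r := by
  have hb0 : 0 < b := by linarith
  have ht : 0 < t := lt_of_lt_of_le (by positivity) hlo
  rcases le_total 0 r with hr | hr
  · rw [abs_of_nonneg hr, ← mul_rpow hb0.le hy.le]
    exact rpow_le_rpow ht.le hhi hr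
  · rw [abs_of_nonpos hr, rpow_neg hb0.le, ← inv_rpow hb0.le, ← mul_rpow (by positivity) hy.le]
    exact rpow_le_rpow_of_nonpos (by positivity) hlo hr

theorem rpow_neg_abs_mul_rpow_le (hb : 1 ≤ b) (hy : 0 < y) (hlo : b⁻¹ * y ≤ t) (hhi : t ≤ b * y)
    (r : ℝ) : b ^ (-|r|) * y ^ r ≤ t ^ r := by
  have hb0 : 0 < b := by linarith
  have ht : 0 < t := lt_of_lt_of_le (by positivity) hlo
  rw [rpow_neg hb0.le, inv_mul_le_iff₀ (by positivity)]
  refine rpow_le_rpow_abs_mul_rpow hb ht ?_ ?_ r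
  · rwa [inv_mul_le_iff₀ hb0]
  · rwa [← inv_mul_le_iff₀ hb0]

end RpowComparison

section Nodes

/-- The angular scale `5 ^ (-(j + 1))` of the `j`-th node. -/
def nodeScale (j : ℕ) : ℝ := ((5 : ℝ) ^ (j + 1))⁻¹

/-- The angle of the `j`-th node. Since `5 ^ k ≡ 1 (mod 4)`, multiplying it by `25 ^ K` gives
`π / 2` modulo `2 π` whenever `j < K`. -/
def nodeAngle (j : ℕ) : ℝ := π / 2 * nodeScale j

/-- The part of the line that the `j`-th node dominates; its radius is comparable to the distance
from `cos (nodeAngle j)` to the endpoint `1`. -/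
def nearNode (j : ℕ) : Set ℝ := Metric.closedBall (cos (nodeAngle j)) (nodeScale j ^ 2 / 4)

theorem nodeScale_pos (j : ℕ) : 0 < nodeScale j := by
  unfold nodeScale
  positivity

theorem nodeScale_le_div_five_of_lt {i j : ℕ} (h : i < j) : nodeScale j ≤ nodeScale i / 5 := by
  rw [nodeScale, nodeScale, div_eq_mul_inv, ← mul_inv, ← pow_succ]
  gcongr <;> norm_num
  lia

theorem nodeScale_le (j : ℕ) : nodeScale j ≤ 1 / 5 := by
  rw [nodeScale, one_div]
  exact inv_anti₀ (by norm_num) (le_self_pow₀ (by norm_num) (by lia))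

theorem inv_five_pow_le_nodeScale {K j : ℕ} (hj : j < K) : ((5 : ℝ) ^ K)⁻¹ ≤ nodeScale j := by
  unfold nodeScale
  gcongr <;> norm_num
  lia

theorem nodeAngle_pos (j : ℕ) : 0 < nodeAngle j := mul_pos (by positivity) (nodeScale_pos j)

theorem nodeAngle_lt_pi (j : ℕ) : nodeAngle j < π := by
  rw [nodeAngle]
  nlinarith [nodeScale_le j, pi_pos]

theorem nodeAngle_mem_Icc (j : ℕ) : nodeAngle j ∈ Icc 0 π :=
  ⟨(nodeAngle_pos j).le, (nodeAngle_lt_pi j).le⟩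

theorem sin_nodeAngle_pos (j : ℕ) : 0 < sin (nodeAngle j) :=
  sin_pos_of_pos_of_lt_pi (nodeAngle_pos j) (nodeAngle_lt_pi j)

theorem sin_nodeAngle_le (j : ℕ) : sin (nodeAngle j) ≤ 2 * nodeScale j :=
  (sin_le (nodeAngle_pos j).le).trans <|
    mul_le_mul_of_nonneg_right (by linarith [pi_le_four]) (nodeScale_pos j).le

theorem nodeScale_sq_le_one_sub_cos (j : ℕ) : nodeScale j ^ 2 / 2 ≤ 1 - cos (nodeAngle j) := by
  have hcos := cos_le_one_sub_mul_cos_sq (x := nodeAngle j)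
    (by rw [abs_of_pos (nodeAngle_pos j)]; exact (nodeAngle_lt_pi j).le)
  have hscale : 2 / π ^ 2 * nodeAngle j ^ 2 = nodeScale j ^ 2 / 2 := by
    rw [nodeAngle]
    field_simp
  linarith

theorem one_sub_cos_nodeAngle_le (j : ℕ) : 1 - cos (nodeAngle j) ≤ 5 / 4 * nodeScale j ^ 2 := by
  have hcos := one_sub_sq_div_two_le_cos (x := nodeAngle j)
  have hpi : π ^ 2 ≤ 10 := by nlinarith [pi_lt_d2, pi_pos]
  have hscale : nodeAngle j ^ 2 / 2 = π ^ 2 / 8 * nodeScale j ^ 2 := by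
    rw [nodeAngle]
    ring
  nlinarith [sq_nonneg (nodeScale j)]

theorem exists_pow_mul_nodeAngle_eq {K j : ℕ} (hj : j < K) :
    ∃ b : ℕ, ((25 ^ K : ℕ) : ℝ) * nodeAngle j = π / 2 + b * (2 * π) := by
  obtain ⟨b, hb⟩ : 4 ∣ 5 ^ (2 * K - (j + 1)) - 1 := by
    simpa using Nat.sub_dvd_pow_sub_pow 5 1 (2 * K - (j + 1))
  have hpow : (5 : ℝ) ^ (2 * K - (j + 1)) = 4 * b + 1 := by
    have := Nat.one_le_pow (2 * K - (j + 1)) 5 (by norm_num)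
    exact_mod_cast (by lia : 5 ^ (2 * K - (j + 1)) = 4 * b + 1)
  have hsplit : (25 : ℝ) ^ K = 5 ^ (2 * K - (j + 1)) * 5 ^ (j + 1) := by
    rw [← pow_add, Nat.sub_add_cancel (by lia), pow_mul]
    norm_num
  refine ⟨b, ?_⟩
  rw [nodeAngle, nodeScale, Nat.cast_pow, Nat.cast_ofNat, hsplit, hpow]
  field_simp
  ring

theorem cos_pow_mul_nodeAngle {K j : ℕ} (hj : j < K) :
    cos (((25 ^ K : ℕ) : ℝ) * nodeAngle j) = 0 := by
  obtain ⟨b, hb⟩ := exists_pow_mul_nodeAngle_eq hj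
  rw [hb, cos_add_nat_mul_two_pi, cos_pi_div_two]

theorem sin_mul_pow_mul_nodeAngle (c : ℕ) {K j : ℕ} (hj : j < K) :
    sin (((4 * c + 1) * 25 ^ K : ℕ) * nodeAngle j) = 1 := by
  obtain ⟨b, hb⟩ := exists_pow_mul_nodeAngle_eq hj
  have hangle : (((4 * c + 1) * 25 ^ K : ℕ) : ℝ) * nodeAngle j
      = π / 2 + (c + (4 * c + 1) * b : ℕ) * (2 * π) := by
    rw [Nat.cast_mul, mul_assoc, hb]
    push_cast
    ring
  rw [hangle, sin_add_nat_mul_two_pi, sin_pi_div_two]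

theorem mem_nearNode {j : ℕ} {x : ℝ} :
    x ∈ nearNode j ↔ |x - cos (nodeAngle j)| ≤ nodeScale j ^ 2 / 4 :=
  Iff.rfl

theorem one_sub_mem_Icc_of_mem_nearNode {j : ℕ} {x : ℝ} (hx : x ∈ nearNode j) :
    1 - x ∈ Icc (nodeScale j ^ 2 / 4) (3 / 2 * nodeScale j ^ 2) := by
  have hlo := nodeScale_sq_le_one_sub_cos j
  have hhi := one_sub_cos_nodeAngle_le j
  rw [mem_nearNode, abs_le] at hx
  constructor <;> linarith

theorem pairwise_disjoint_nearNode : Pairwise (Function.onFun Disjoint nearNode) := by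
  refine (pairwise_disjoint_on nearNode).2 fun i j hij => Set.disjoint_left.2 fun x hi hj => ?_
  have hlo := (one_sub_mem_Icc_of_mem_nearNode hi).1
  have hhi := (one_sub_mem_Icc_of_mem_nearNode hj).2
  nlinarith [nodeScale_le_div_five_of_lt hij, nodeScale_pos i, nodeScale_pos j]

theorem nonneg_of_mem_nearNode {j : ℕ} {x : ℝ} (hx : x ∈ nearNode j) : 0 ≤ x := by
  nlinarith [(one_sub_mem_Icc_of_mem_nearNode hx).2, nodeScale_le j, nodeScale_pos j]

theorem mem_Ioo_of_mem_nearNode {j : ℕ} {x : ℝ} (hx : x ∈ nearNode j) : x ∈ Ioo (-1 : ℝ) 1 := by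
  have hσ2 : 0 < nodeScale j ^ 2 := pow_pos (nodeScale_pos j) 2
  constructor <;> linarith [nonneg_of_mem_nearNode hx, (one_sub_mem_Icc_of_mem_nearNode hx).1]

theorem one_sub_sq_mem_Icc_of_mem_nearNode {j : ℕ} {x : ℝ} (hx : x ∈ nearNode j) :
    1 - x ^ 2 ∈ Icc (nodeScale j ^ 2 / 4) (3 * nodeScale j ^ 2) := by
  have hx0 := nonneg_of_mem_nearNode hx
  obtain ⟨hlo, hhi⟩ := one_sub_mem_Icc_of_mem_nearNode hx
  constructor <;> nlinarith [nodeScale_pos j, nodeScale_le j]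

theorem nodeScale_rpow_le_jacobi {α β : ℝ} {j : ℕ} {x : ℝ} (hx : x ∈ nearNode j) :
    2 ^ (-|α|) * 4 ^ (-|β|) * nodeScale j ^ (2 * β) ≤ jacobi α β x := by
  have hσ := nodeScale_pos j
  have hx0 := nonneg_of_mem_nearNode hx
  obtain ⟨hlo, hhi⟩ := one_sub_mem_Icc_of_mem_nearNode hx
  have hσ2 : 0 < nodeScale j ^ 2 := by positivity
  have hplus : 2 ^ (-|α|) * 1 ^ α ≤ (1 + x) ^ α :=
    rpow_neg_abs_mul_rpow_le (by norm_num) one_pos (by linarith) (by linarith) α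
  have hminus : 4 ^ (-|β|) * (nodeScale j ^ 2) ^ β ≤ (1 - x) ^ β :=
    rpow_neg_abs_mul_rpow_le (by norm_num) hσ2 (by linarith) (by linarith) β
  rw [one_rpow, mul_one] at hplus
  rw [rpow_mul hσ.le, rpow_two, mul_assoc, jacobi]
  gcongr

theorem cos_nodeAngle_mem_Icc (j : ℕ) : cos (nodeAngle j) ∈ Icc (0 : ℝ) 1 :=
  ⟨nonneg_of_mem_nearNode (Metric.mem_closedBall_self (by positivity)), cos_le_one _⟩

end Nodes

section Lorentz

/-- The Lorentz (Cauchy) profile of width `δ` centred at `a`. -/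
def lorentz (δ a x : ℝ) : ℝ := (1 + ((x - a) / δ) ^ 2)⁻¹

theorem lorentz_pos (δ a x : ℝ) : 0 < lorentz δ a x := by
  unfold lorentz
  positivity

theorem lorentz_le_one (δ a x : ℝ) : lorentz δ a x ≤ 1 :=
  inv_le_one_of_one_le₀ (le_add_of_nonneg_right (sq_nonneg _))

@[fun_prop]
theorem measurable_lorentz (δ a : ℝ) : Measurable (lorentz δ a) := by
  unfold lorentz
  fun_prop

theorem lintegral_lorentz {δ : ℝ} (hδ : 0 < δ) (a : ℝ) :
    ∫⁻ x, ENNReal.ofReal (lorentz δ a x) = ENNReal.ofReal (π * δ) := by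
  have hint : Integrable (lorentz δ a) :=
    (integrable_inv_one_add_sq.comp_div hδ.ne').comp_sub_right a
  have hval : ∫ x, lorentz δ a x = π * δ := by
    unfold lorentz
    rw [integral_sub_right_eq_self fun x : ℝ => (1 + (x / δ) ^ 2)⁻¹,
      Measure.integral_comp_div fun y : ℝ => (1 + y ^ 2)⁻¹, integral_univ_inv_one_add_sq,
      abs_of_pos hδ, smul_eq_mul, mul_comm]
  rw [← ofReal_integral_eq_lintegral_ofReal hint (ae_of_all _ fun x => (lorentz_pos δ a x).le),
    hval]

theorem setLIntegral_Icc_ofReal_le_of_le_sum_lorentz {ι : Type*} {s : Finset ι} {c δ a : ι → ℝ}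
    {f : ℝ → ℝ} {B u v : ℝ} (hδ : ∀ j ∈ s, 0 < δ j) (hc : ∀ j ∈ s, 0 ≤ c j) (hB : 0 ≤ B)
    (huv : u ≤ v) (hf : ∀ x ∈ Ioo u v, f x ≤ ∑ j ∈ s, c j * lorentz (δ j) (a j) x + B) :
    ∫⁻ x in Icc u v, ENNReal.ofReal (f x)
      ≤ ENNReal.ofReal (∑ j ∈ s, c j * (π * δ j) + B * (v - u)) := by
  have hterm (j : ι) (hj : j ∈ s) (x : ℝ) : 0 ≤ c j * lorentz (δ j) (a j) x :=
    mul_nonneg (hc j hj) (lorentz_pos _ _ _).le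
  have hlorentz (j : ι) (hj : j ∈ s) : ∫⁻ x in Ioo u v, ENNReal.ofReal (c j * lorentz (δ j) (a j) x)
      ≤ ENNReal.ofReal (c j * (π * δ j)) := by
    simp_rw [ENNReal.ofReal_mul (hc j hj)]
    rw [lintegral_const_mul _ (by fun_prop), ← lintegral_lorentz (hδ j hj) (a j)]
    gcongr
    exact Measure.restrict_le_self
  rw [← restrict_Ioo_eq_restrict_Icc]
  calc ∫⁻ x in Ioo u v, ENNReal.ofReal (f x)
      ≤ ∫⁻ x in Ioo u v, (∑ j ∈ s, ENNReal.ofReal (c j * lorentz (δ j) (a j) x)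
          + ENNReal.ofReal B) := by
        refine setLIntegral_mono' measurableSet_Ioo fun x hx =>
          (ENNReal.ofReal_le_ofReal (hf x hx)).trans_eq ?_
        rw [ENNReal.ofReal_add (Finset.sum_nonneg fun j hj => hterm j hj x) hB,
          ENNReal.ofReal_sum_of_nonneg fun j hj => hterm j hj x]
    _ = (∑ j ∈ s, ∫⁻ x in Ioo u v, ENNReal.ofReal (c j * lorentz (δ j) (a j) x))
          + ENNReal.ofReal (B * (v - u)) := by
        rw [lintegral_add_right _ measurable_const, lintegral_finsetSum _ fun j _ => by fun_prop,
          setLIntegral_const, Real.volume_Ioo, ENNReal.ofReal_mul hB]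
    _ ≤ ∑ j ∈ s, ENNReal.ofReal (c j * (π * δ j)) + ENNReal.ofReal (B * (v - u)) := by
        gcongr with j hj
        exact hlorentz j hj
    _ = _ := by
        have hsum (j : ι) (hj : j ∈ s) : 0 ≤ c j * (π * δ j) :=
          mul_nonneg (hc j hj) (mul_nonneg pi_pos.le (hδ j hj).le)
        rw [ENNReal.ofReal_add (Finset.sum_nonneg hsum) (mul_nonneg hB (sub_nonneg.2 huv)),
          ENNReal.ofReal_sum_of_nonneg hsum]

end Lorentz

section NodeKernel

/-- The fundamental Lagrange polynomial, among the zeros of the Chebyshev polynomial of degree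
`25 ^ K`, of the `j`-th node. -/
def nodeKernel (K j : ℕ) : ℝ[X] := chebLagrange (25 ^ K) (nodeAngle j)

theorem pow_twentyFive_eq_sq_pow_five (K : ℕ) : (25 : ℝ) ^ K = (5 ^ K) ^ 2 := by
  rw [← pow_mul, pow_mul']
  norm_num

variable {K j : ℕ} {x : ℝ}

theorem abs_eval_nodeKernel_le (K j : ℕ) (hx : x ∈ Icc (-1 : ℝ) 1) :
    |(nodeKernel K j).eval x| ≤ 3 := by
  simpa only [nodeKernel, cos_arccos hx.1 hx.2] using
    abs_eval_chebLagrange_cos_le (N := 25 ^ K) (by positivity) (nodeAngle j) (arccos x)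

theorem abs_sub_mul_abs_eval_nodeKernel_le (hj : j < K) (hx : x ∈ Icc (-1 : ℝ) 1) :
    |x - cos (nodeAngle j)| * |(nodeKernel K j).eval x| ≤ 2 * (nodeScale j / 25 ^ K) := by
  have hkernel := abs_sub_mul_abs_eval_chebLagrange_cos_le (cos_pow_mul_nodeAngle hj) (arccos x)
  rw [cos_arccos hx.1 hx.2, abs_of_pos (sin_nodeAngle_pos j)] at hkernel
  refine hkernel.trans ?_
  rw [← mul_div_assoc, Nat.cast_pow, Nat.cast_ofNat]
  gcongr
  exact sin_nodeAngle_le j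

theorem eval_nodeKernel_cos_nodeAngle (hj : j < K) :
    (nodeKernel K j).eval (cos (nodeAngle j)) = 1 :=
  eval_chebLagrange_cos_self (by positivity) (cos_pow_mul_nodeAngle hj) (sin_nodeAngle_pos j).ne'

theorem abs_eval_nodeKernel_le_of_notMem_nearNode (hj : j < K) (hx : x ∈ Icc (-1 : ℝ) 1)
    (hfar : x ∉ nearNode j) : |(nodeKernel K j).eval x| ≤ 8 / 5 ^ K := by
  have hσ := nodeScale_pos j
  have hkernel := abs_sub_mul_abs_eval_nodeKernel_le hj hx
  have hdist : nodeScale j ^ 2 / 4 ≤ |x - cos (nodeAngle j)| := (lt_of_not_ge hfar).le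
  calc |(nodeKernel K j).eval x|
      = (nodeScale j ^ 2 / 4 * |(nodeKernel K j).eval x|) * (4 / nodeScale j ^ 2) := by
        field_simp
    _ ≤ 2 * (nodeScale j / 25 ^ K) * (4 / nodeScale j ^ 2) := by
        gcongr ?_ * _
        exact (mul_le_mul_of_nonneg_right hdist (abs_nonneg _)).trans hkernel
    _ = 8 / 25 ^ K * (nodeScale j)⁻¹ := by
        field_simp
        norm_num
    _ ≤ 8 / 25 ^ K * 5 ^ K := by
        gcongr
        exact inv_le_of_inv_le₀ (by positivity) (inv_five_pow_le_nodeScale hj)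
    _ = 8 / 5 ^ K := by
        rw [pow_twentyFive_eq_sq_pow_five]
        field_simp

theorem abs_eval_nodeKernel_pow_le_lorentz (hj : j < K) (hx : x ∈ Icc (-1 : ℝ) 1) (e : ℕ) :
    |(nodeKernel K j).eval x| ^ (e + 2)
      ≤ 3 ^ e * 13 * lorentz (nodeScale j / 25 ^ K) (cos (nodeAngle j)) x := by
  set l := |(nodeKernel K j).eval x|
  set δ := nodeScale j / 25 ^ K
  have hδ : 0 < δ := div_pos (nodeScale_pos j) (by positivity)
  have hl : l ≤ 3 := abs_eval_nodeKernel_le K j hx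
  have hprofile : |(x - cos (nodeAngle j)) / δ| * l ≤ 2 := by
    rw [abs_div, abs_of_pos hδ, div_mul_eq_mul_div, div_le_iff₀ hδ]
    exact abs_sub_mul_abs_eval_nodeKernel_le hj hx
  have hsq : l ^ 2 ≤ 13 * lorentz δ (cos (nodeAngle j)) x := by
    rw [lorentz, ← div_eq_mul_inv, le_div_iff₀ (by positivity), ← sq_abs ((x - _) / δ)]
    have hl2 : l ^ 2 ≤ 3 ^ 2 := pow_le_pow_left₀ (abs_nonneg _) hl 2
    have hprofile2 := pow_le_pow_left₀ (by positivity) hprofile 2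
    linarith
  rw [pow_add, mul_assoc]
  gcongr

end NodeKernel

section NodeBump

/-- The product of a power of the `j`-th node kernel, which localises, with a power of `1 - X ^ 2`,
which absorbs the singularities of `dualTest (jacobi α β)` for `α, β ≤ s`. -/
def nodeBump (s K j : ℕ) : ℝ[X] := nodeKernel K j ^ (2 * s + 6) * (1 - X ^ 2) ^ (s + 1)

/-- The frequency of the test functions: larger than the degrees in play, and `≡ 1 (mod 4)`
times `25 ^ K`, so that `sin (testFreq s K * ·)` equals `1` at the nodes. -/
def testFreq (s K : ℕ) : ℕ := (4 * (s + 3) + 1) * 25 ^ K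

theorem natDegree_nodeBump_le (s K j : ℕ) :
    (nodeBump s K j).natDegree ≤ (2 * s + 6) * 25 ^ K + 2 * (s + 1) := by
  have hweight : (1 - X ^ 2 : ℝ[X]).natDegree ≤ 2 := by compute_degree
  refine natDegree_mul_le.trans (add_le_add ?_ ?_)
  · exact natDegree_pow_le_of_le _ (natDegree_chebLagrange_le _ _)
  · exact (natDegree_pow_le_of_le _ hweight).trans_eq (mul_comm _ _)

theorem eval_nodeBump (s K j : ℕ) (x : ℝ) :
    (nodeBump s K j).eval x
      = (nodeKernel K j).eval x ^ (2 * s + 6) * (1 - x ^ 2) ^ (s + 1) := by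
  simp [nodeBump]

theorem exists_abs_oscillatingTest_nodeBump_le (s : ℕ) :
    ∃ A ≥ 0, ∀ (K j : ℕ) (x : ℝ), x ∈ Icc (-1 : ℝ) 1 →
      |oscillatingTest (testFreq s K) (nodeBump s K j) (arccos x)|
        ≤ A * 25 ^ K * (|(nodeKernel K j).eval x| ^ (2 * s + 5) * (1 - x ^ 2) ^ (s + 1)) := by
  refine ⟨(6 * s + 9) * (4 * (s + 3) + 1) + 2 * (2 * s + 6), by positivity, fun K j x hx => ?_⟩
  have hN : 0 < 25 ^ K := by positivity
  have hbound := abs_oscillatingTest_pow_mul_one_sub_sq_pow_le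
    (abs_eval_chebLagrange_cos_le hN (nodeAngle j) (arccos x))
    (abs_sin_mul_eval_derivative_chebLagrange_cos_le hN (nodeAngle j) (arccos x))
    (testFreq s K) (2 * s + 5) s
  rw [cos_arccos hx.1 hx.2] at hbound
  refine hbound.trans_eq (congrArg (· * _) ?_)
  rw [testFreq]
  push_cast
  ring

theorem exists_abs_dualTest_nodeBump_le (α β : ℝ) (s : ℕ) :
    ∃ A ≥ 0, ∀ (K j : ℕ) (x : ℝ), x ∈ Ioo (-1 : ℝ) 1 →
      |dualTest (jacobi α β) (testFreq s K) (nodeBump s K j) x|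
        ≤ A * 25 ^ K * |(nodeKernel K j).eval x| ^ (2 * s + 5)
          * ((1 - x ^ 2) ^ (s + 1) * √(1 - x ^ 2)⁻¹ / jacobi α β x) := by
  obtain ⟨A, hA, hosc⟩ := exists_abs_oscillatingTest_nodeBump_le s
  refine ⟨A, hA, fun K j x hx => ?_⟩
  have hw := jacobi_pos α β hx
  rw [dualTest, abs_div, abs_mul, abs_of_pos hw, abs_of_nonneg (sqrt_nonneg _)]
  calc _ ≤ A * 25 ^ K * (|(nodeKernel K j).eval x| ^ (2 * s + 5) * (1 - x ^ 2) ^ (s + 1))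
        * √(1 - x ^ 2)⁻¹ / jacobi α β x := by
        gcongr
        exact hosc K j x (Ioo_subset_Icc_self hx)
    _ = _ := by ring

/-- The coefficient `nodeScale j ^ (γ - 2 * (s + 1))`, which balances the size of
`(1 - X ^ 2) ^ (s + 1)` near the `j`-th node and leaves the net scaling `nodeScale j ^ γ`. -/
def bumpCoeff (γ : ℝ) (s j : ℕ) : ℝ := nodeScale j ^ γ / (nodeScale j ^ 2) ^ (s + 1)

theorem bumpCoeff_pos (γ : ℝ) (s j : ℕ) : 0 < bumpCoeff γ s j := by
  have := nodeScale_pos j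
  unfold bumpCoeff
  positivity

theorem bumpCoeff_le {γ : ℝ} (hγ : 0 ≤ γ) (s : ℕ) {K j : ℕ} (hj : j < K) :
    bumpCoeff γ s j ≤ (25 ^ K) ^ (s + 1) := by
  have hσ := nodeScale_pos j
  have hσ1 : nodeScale j ≤ 1 := (nodeScale_le j).trans (by norm_num)
  have hσ2 : ((25 : ℝ) ^ K)⁻¹ ≤ nodeScale j ^ 2 := by
    calc ((25 : ℝ) ^ K)⁻¹ = ((5 ^ K)⁻¹) ^ 2 := by rw [pow_twentyFive_eq_sq_pow_five, inv_pow]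
      _ ≤ nodeScale j ^ 2 := by
        gcongr
        exact inv_five_pow_le_nodeScale hj
  calc bumpCoeff γ s j ≤ 1 / (((25 : ℝ) ^ K)⁻¹) ^ (s + 1) := by
        unfold bumpCoeff
        gcongr
        exact rpow_le_one hσ.le hσ1 hγ
    _ = (25 ^ K) ^ (s + 1) := by simp

theorem exists_abs_bumpCoeff_mul_dualTest_nodeBump_le_of_notMem {α β γ : ℝ} {s : ℕ}
    (hα : α ≤ s) (hβ : β ≤ s) (hγ : 0 ≤ γ) :
    ∃ B ≥ 0, ∀ K, ∀ j < K, ∀ x ∈ Ioo (-1 : ℝ) 1, x ∉ nearNode j →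
      |bumpCoeff γ s j * dualTest (jacobi α β) (testFreq s K) (nodeBump s K j) x|
        ≤ B / 5 ^ K := by
  obtain ⟨A, hA, hdual⟩ := exists_abs_dualTest_nodeBump_le α β s
  refine ⟨A * 8 ^ (2 * s + 5) * (2 ^ (s - α) * 2 ^ (s - β)), by positivity,
    fun K j hj x hx hfar => ?_⟩
  have hw := jacobi_pos α β hx
  have hx2 : 0 ≤ 1 - x ^ 2 := by nlinarith [hx.1, hx.2]
  have hkernel := abs_eval_nodeKernel_le_of_notMem_nearNode hj (Ioo_subset_Icc_self hx) hfar
  have hweight : (1 - x ^ 2) ^ (s + 1) * √(1 - x ^ 2)⁻¹ / jacobi α β x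
      ≤ 2 ^ (s - α) * 2 ^ (s - β) :=
    (div_le_iff₀ hw).2 (one_sub_sq_pow_succ_mul_le_jacobi hα hβ hx)
  rw [abs_mul, abs_of_pos (bumpCoeff_pos γ s j)]
  calc _ ≤ (25 ^ K) ^ (s + 1) * (A * 25 ^ K * (8 / 5 ^ K) ^ (2 * s + 5)
        * (2 ^ (s - α) * 2 ^ (s - β))) := by
        gcongr
        · exact bumpCoeff_le hγ s hj
        · refine (hdual K j x hx).trans ?_
          gcongr
    _ = _ := by
        have hN : (5 : ℝ) ^ K ≠ 0 := by positivity
        rw [pow_twentyFive_eq_sq_pow_five, div_pow]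
        generalize (5 : ℝ) ^ K = N at hN ⊢
        field_simp
        ring

theorem exists_abs_bumpCoeff_mul_dualTest_nodeBump_le_of_mem (α β γ : ℝ) (s : ℕ) :
    ∃ B ≥ 0, ∀ K, ∀ j < K, ∀ x ∈ nearNode j,
      |bumpCoeff γ s j * dualTest (jacobi α β) (testFreq s K) (nodeBump s K j) x|
        ≤ B * 25 ^ K * nodeScale j ^ (γ - 2 * β - 1)
          * lorentz (nodeScale j / 25 ^ K) (cos (nodeAngle j)) x := by
  obtain ⟨A, hA, hdual⟩ := exists_abs_dualTest_nodeBump_le α β s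
  refine ⟨A * (3 ^ (2 * s + 3) * 13) * (3 ^ (s + 1) * 2 / (2 ^ (-|α|) * 4 ^ (-|β|))),
    by positivity, fun K j hj x hx => ?_⟩
  have hσ := nodeScale_pos j
  have hL := (lorentz_pos (nodeScale j / 25 ^ K) (cos (nodeAngle j)) x).le
  have hxI := mem_Ioo_of_mem_nearNode hx
  obtain ⟨hlo, hhi⟩ := one_sub_sq_mem_Icc_of_mem_nearNode hx
  have hpos : 0 < 1 - x ^ 2 := lt_of_lt_of_le (by positivity) hlo
  have hw := jacobi_pos α β hxI
  have hsqrt : √(1 - x ^ 2)⁻¹ ≤ 2 / nodeScale j := by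
    refine sqrt_le_iff.2 ⟨by positivity, (inv_anti₀ (by positivity) hlo).trans_eq ?_⟩
    field_simp
    norm_num
  rw [abs_mul, abs_of_pos (bumpCoeff_pos γ s j)]
  calc _ ≤ bumpCoeff γ s j * (A * 25 ^ K
          * (3 ^ (2 * s + 3) * 13 * lorentz (nodeScale j / 25 ^ K) (cos (nodeAngle j)) x)
          * ((3 * nodeScale j ^ 2) ^ (s + 1) * (2 / nodeScale j)
            / (2 ^ (-|α|) * 4 ^ (-|β|) * nodeScale j ^ (2 * β)))) := by
        gcongr
        · exact (bumpCoeff_pos γ s j).le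
        · refine (hdual K j x hxI).trans ?_
          gcongr
          · exact abs_eval_nodeKernel_pow_le_lorentz hj (Ioo_subset_Icc_self hxI) (2 * s + 3)
          · exact nodeScale_rpow_le_jacobi hx
    _ = _ := by
        rw [bumpCoeff, mul_pow, rpow_sub hσ, rpow_sub hσ, rpow_one]
        field_simp

end NodeBump

section TestPoly

/-- The polynomial part of the dual test function: the superposition of the bumps at the first `K`
nodes, the `j`-th of them scaled by `nodeScale j ^ γ`. -/
def testPoly (γ : ℝ) (s K : ℕ) : ℝ[X] :=
  ∑ j ∈ Finset.range K, C (bumpCoeff γ s j) * nodeBump s K j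

theorem natDegree_testPoly_lt (γ : ℝ) (s K : ℕ) :
    25 ^ K + (testPoly γ s K).natDegree + 1 < testFreq s K := by
  have hdeg : (testPoly γ s K).natDegree ≤ (2 * s + 6) * 25 ^ K + 2 * (s + 1) :=
    natDegree_sum_le_of_forall_le _ _ fun j _ =>
      (natDegree_C_mul_le _ _).trans (natDegree_nodeBump_le s K j)
  have hN : 1 ≤ 25 ^ K := Nat.one_le_pow _ _ (by norm_num)
  rw [testFreq]
  nlinarith

variable {α β γ : ℝ} {s : ℕ}

theorem exists_abs_sum_dualTest_nodeBump_le_of_notMem (hα : α ≤ s) (hβ : β ≤ s) (hγ : 0 ≤ γ) :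
    ∃ B ≥ 0, ∀ K, ∀ J ⊆ Finset.range K, ∀ x ∈ Ioo (-1 : ℝ) 1, (∀ j ∈ J, x ∉ nearNode j) →
      |∑ j ∈ J, bumpCoeff γ s j * dualTest (jacobi α β) (testFreq s K) (nodeBump s K j) x|
        ≤ B := by
  obtain ⟨B, hB, hfar⟩ := exists_abs_bumpCoeff_mul_dualTest_nodeBump_le_of_notMem hα hβ hγ
  refine ⟨B, hB, fun K J hJ x hx hxJ => ?_⟩
  have hcard : (J.card : ℝ) ≤ 5 ^ K := by
    have hJK : J.card ≤ K := by simpa using Finset.card_le_card hJ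
    exact_mod_cast hJK.trans (Nat.lt_pow_self (by norm_num)).le
  calc _ ≤ ∑ j ∈ J, B / 5 ^ K :=
        (Finset.abs_sum_le_sum_abs _ _).trans <| Finset.sum_le_sum fun j hj =>
          hfar K j (Finset.mem_range.1 (hJ hj)) x hx (hxJ j hj)
    _ = B * (J.card / 5 ^ K) := by
        rw [Finset.sum_const, nsmul_eq_mul]
        ring
    _ ≤ B := mul_le_of_le_one_right hB (div_le_one_of_le₀ hcard (by positivity))

theorem exists_abs_dualTest_testPoly_le (hα : α ≤ s) (hβ : β ≤ s) (hγ : 0 ≤ γ) :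
    ∃ A ≥ 0, ∃ B ≥ 0, ∀ K, ∀ x ∈ Ioo (-1 : ℝ) 1,
      |dualTest (jacobi α β) (testFreq s K) (testPoly γ s K) x| ≤ B ∨
      ∃ j ∈ Finset.range K, |dualTest (jacobi α β) (testFreq s K) (testPoly γ s K) x|
        ≤ A * (25 ^ K * nodeScale j ^ (γ - 2 * β - 1))
            * lorentz (nodeScale j / 25 ^ K) (cos (nodeAngle j)) x + B := by
  obtain ⟨B, hB, hfar⟩ := exists_abs_sum_dualTest_nodeBump_le_of_notMem hα hβ hγ
  obtain ⟨A, hA, hnear⟩ := exists_abs_bumpCoeff_mul_dualTest_nodeBump_le_of_mem α β γ s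
  refine ⟨A, hA, B, hB, fun K x hx => ?_⟩
  rw [testPoly, dualTest_sum]
  by_cases hx_near : ∃ j ∈ Finset.range K, x ∈ nearNode j
  · obtain ⟨j, hj, hxj⟩ := hx_near
    have hrest := hfar K ((Finset.range K).erase j) (Finset.erase_subset _ _) x hx fun i hi hxi =>
      Set.disjoint_left.1 (pairwise_disjoint_nearNode (Finset.ne_of_mem_erase hi)) hxi hxj
    refine Or.inr ⟨j, hj, ?_⟩
    rw [← Finset.add_sum_erase _ _ hj, ← mul_assoc]
    exact (abs_add_le _ _).trans (add_le_add (hnear K j (Finset.mem_range.1 hj) x hxj) hrest)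
  · push Not at hx_near
    exact Or.inl (hfar K _ (Finset.Subset.refl _) x hx hx_near)

theorem add_rpow_le_two_rpow_mul_add_rpow {a b r : ℝ} (ha : 0 ≤ a) (hb : 0 ≤ b) (hr : 1 ≤ r) :
    (a + b) ^ r ≤ 2 ^ (r - 1) * (a ^ r + b ^ r) := by
  lift a to NNReal using ha
  lift b to NNReal using hb
  exact_mod_cast NNReal.rpow_add_le_mul_rpow_add_rpow a b hr

theorem exists_abs_dualTest_testPoly_rpow_le (hα : α ≤ s) (hβ : β ≤ s) (hγ : 0 ≤ γ) {r : ℝ}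
    (hr : 1 ≤ r) :
    ∃ A ≥ 0, ∃ B ≥ 0, ∀ K, ∀ x ∈ Ioo (-1 : ℝ) 1,
      |dualTest (jacobi α β) (testFreq s K) (testPoly γ s K) x| ^ r
        ≤ A * (∑ j ∈ Finset.range K, (25 ^ K * nodeScale j ^ (γ - 2 * β - 1)) ^ r
            * lorentz (nodeScale j / 25 ^ K) (cos (nodeAngle j)) x) + B := by
  obtain ⟨A, hA, B, hB, hbound⟩ := exists_abs_dualTest_testPoly_le hα hβ hγ
  refine ⟨2 ^ (r - 1) * A ^ r, by positivity, 2 ^ (r - 1) * B ^ r, by positivity,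
    fun K x hx => ?_⟩
  set M : ℕ → ℝ := fun j => 25 ^ K * nodeScale j ^ (γ - 2 * β - 1)
  set L : ℕ → ℝ := fun j => lorentz (nodeScale j / 25 ^ K) (cos (nodeAngle j)) x
  have hM (j : ℕ) : 0 < M j := mul_pos (by positivity) (rpow_pos_of_pos (nodeScale_pos j) _)
  have hL (j : ℕ) : 0 < L j := lorentz_pos _ _ _
  have hterm (j : ℕ) : 0 ≤ M j ^ r * L j := mul_nonneg (rpow_nonneg (hM j).le r) (hL j).le
  rcases hbound K x hx with hfar | ⟨j, hj, hnear⟩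
  · calc _ ≤ B ^ r := by gcongr
      _ ≤ 2 ^ (r - 1) * B ^ r :=
          le_mul_of_one_le_left (by positivity) (one_le_rpow one_le_two (by linarith))
      _ ≤ _ := le_add_of_nonneg_left <|
          mul_nonneg (by positivity) (Finset.sum_nonneg fun j _ => hterm j)
  · have hAM : 0 ≤ A * M j := mul_nonneg hA (hM j).le
    calc _ ≤ (A * M j * L j + B) ^ r := by gcongr
      _ ≤ 2 ^ (r - 1) * ((A * M j * L j) ^ r + B ^ r) :=
          add_rpow_le_two_rpow_mul_add_rpow (mul_nonneg hAM (hL j).le) hB hr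
      _ = 2 ^ (r - 1) * A ^ r * (M j ^ r * L j ^ r) + 2 ^ (r - 1) * B ^ r := by
          rw [mul_rpow hAM (hL j).le, mul_rpow hA (hM j).le]
          ring
      _ ≤ 2 ^ (r - 1) * A ^ r * (M j ^ r * L j) + 2 ^ (r - 1) * B ^ r := by
          have := rpow_le_self_of_le_one (hL j).le (lorentz_le_one _ _ _) hr
          have := rpow_nonneg (hM j).le r
          gcongr
      _ ≤ _ := by
          gcongr
          exact Finset.single_le_sum (fun i _ => hterm i) hj

/- At the critical exponent each of the `K` nodes contributes the same amount. -/
theorem exists_lintegral_dualTest_testPoly_le (hα : α ≤ s) (hβ : β ≤ s) {r : ℝ} (hr : 1 ≤ r)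
    (hγ : 0 ≤ 2 * β + 1 - r⁻¹) :
    ∃ C > 0, ∀ K ≥ 1, ∫⁻ x in Icc (-1) 1,
      ENNReal.ofReal
        (|dualTest (jacobi α β) (testFreq s K) (testPoly (2 * β + 1 - r⁻¹) s K) x| ^ r)
        ≤ ENNReal.ofReal (C * (K * (25 ^ K) ^ (r - 1))) := by
  obtain ⟨A, hA, B, hB, hbound⟩ := exists_abs_dualTest_testPoly_rpow_le hα hβ hγ hr
  refine ⟨A * π + B * 2 + 1, by positivity, fun K hK => ?_⟩
  have hσ (j : ℕ) := nodeScale_pos j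
  have hN : (0 : ℝ) < 25 ^ K := by positivity
  have hKN : 1 ≤ K * ((25 : ℝ) ^ K) ^ (r - 1) :=
    one_le_mul_of_one_le_of_one_le (by exact_mod_cast hK)
      (one_le_rpow (one_le_pow₀ (by norm_num)) (by linarith))
  have hscale (j : ℕ) : (25 ^ K * nodeScale j ^ (2 * β + 1 - r⁻¹ - 2 * β - 1)) ^ r
      = (25 ^ K) ^ r / nodeScale j := by
    rw [mul_rpow hN.le (rpow_nonneg (hσ j).le _), ← rpow_mul (hσ j).le,
      show (2 * β + 1 - r⁻¹ - 2 * β - 1) * r = -1 by field_simp; ring, rpow_neg_one, div_eq_mul_inv]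
  have hsum : ∑ j ∈ Finset.range K, A * ((25 ^ K) ^ r / nodeScale j) * (π * (nodeScale j / 25 ^ K))
      = A * π * (K * (25 ^ K) ^ (r - 1)) := by
    have hterm (j : ℕ) : A * ((25 ^ K) ^ r / nodeScale j) * (π * (nodeScale j / 25 ^ K))
        = A * π * (25 ^ K) ^ (r - 1) := by
      have := hσ j
      rw [rpow_sub_one hN.ne']
      field_simp
    rw [Finset.sum_congr rfl fun j _ => hterm j, Finset.sum_const, Finset.card_range, nsmul_eq_mul]
    ring
  refine (setLIntegral_Icc_ofReal_le_of_le_sum_lorentz (s := Finset.range K)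
    (c := fun j => A * ((25 ^ K) ^ r / nodeScale j)) (a := fun j => cos (nodeAngle j))
    (fun j _ => div_pos (hσ j) hN) (fun j _ => ?_) hB (by norm_num) fun x hx =>
      (hbound K x hx).trans_eq ?_).trans (ENNReal.ofReal_le_ofReal ?_)
  · have := hσ j
    positivity
  · simp only [hscale, Finset.mul_sum, mul_assoc]
  · rw [hsum]
    nlinarith

theorem LpOn_ofReal (g : ℝ → ℝ) {r : ℝ} (hr : 0 < r) (a b : ℝ) :
    LpOn g (ENNReal.ofReal r) a b
      = (∫⁻ x in Icc a b, ENNReal.ofReal (|g x| ^ r)) ^ (1 / r) := by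
  rw [LpOn, eLpNorm_eq_lintegral_rpow_enorm_toReal (by simpa using hr) ENNReal.ofReal_ne_top,
    ENNReal.toReal_ofReal hr.le]
  simp_rw [enorm_eq_ofReal_abs, ENNReal.ofReal_rpow_of_nonneg (abs_nonneg _) hr.le]

theorem exists_LpOn_dualTest_testPoly_le (hα : α ≤ s) (hβ : β ≤ s) {r : ℝ} (hr : 1 ≤ r)
    (hγ : 0 ≤ 2 * β + 1 - r⁻¹) :
    ∃ C > 0, ∀ K ≥ 1,
      LpOn (dualTest (jacobi α β) (testFreq s K) (testPoly (2 * β + 1 - r⁻¹) s K))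
        (ENNReal.ofReal r) (-1) 1 ≤ ENNReal.ofReal (C * (K ^ r⁻¹ * (25 ^ K) ^ (1 - r⁻¹))) := by
  obtain ⟨C, hC, hint⟩ := exists_lintegral_dualTest_testPoly_le hα hβ hr hγ
  have hr0 : 0 < r := by linarith
  refine ⟨C ^ r⁻¹, by positivity, fun K hK => ?_⟩
  rw [LpOn_ofReal _ hr0, one_div]
  refine (ENNReal.rpow_le_rpow (hint K hK) (by positivity)).trans_eq ?_
  rw [ENNReal.ofReal_rpow_of_nonneg (by positivity) (by positivity), mul_rpow hC.le (by positivity),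
    mul_rpow (by positivity) (by positivity), ← rpow_mul (by positivity), sub_mul,
    mul_inv_cancel₀ hr0.ne', one_mul]

end TestPoly

section LowerBound

/-- The heights of the jumps of the extremal step functions. -/
def stepHeight (γ : ℝ) (j : ℕ) : ℝ := nodeScale j ^ (-γ)

/-- The extremal step function, with jumps at the first `K` nodes. -/
def nodeStep (γ : ℝ) (K : ℕ) : ℝ → ℝ :=
  stepSum (Finset.range K) (stepHeight γ) (cos ∘ nodeAngle)

theorem stepHeight_pos (γ : ℝ) (j : ℕ) : 0 < stepHeight γ j :=
  rpow_pos_of_pos (nodeScale_pos j) _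

theorem nodeScale_sq_le_one_sub_cos_sq (j : ℕ) :
    nodeScale j ^ 2 / 2 ≤ 1 - cos (nodeAngle j) ^ 2 := by
  obtain ⟨hcos0, hcos1⟩ := cos_nodeAngle_mem_Icc j
  nlinarith [nodeScale_sq_le_one_sub_cos j]

theorem le_eval_testPoly_cos_nodeAngle (γ : ℝ) (s : ℕ) {K j : ℕ} (hj : j < K) :
    nodeScale j ^ γ * (1 / 2) ^ (s + 1) ≤ (testPoly γ s K).eval (cos (nodeAngle j)) := by
  have hσ := nodeScale_pos j
  have hterm (i : ℕ) :
      0 ≤ bumpCoeff γ s i * (nodeBump s K i).eval (cos (nodeAngle j)) := by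
    have hkernel : 0 ≤ (nodeKernel K i).eval (cos (nodeAngle j)) ^ (2 * s + 6) :=
      Even.pow_nonneg ⟨s + 3, by ring⟩ _
    have hsin : 0 ≤ 1 - cos (nodeAngle j) ^ 2 := by linarith [cos_sq_le_one (nodeAngle j)]
    have hcoeff := bumpCoeff_pos γ s i
    rw [eval_nodeBump]
    positivity
  calc nodeScale j ^ γ * (1 / 2) ^ (s + 1)
      = bumpCoeff γ s j * (nodeScale j ^ 2 / 2) ^ (s + 1) := by
        rw [bumpCoeff, div_pow, div_pow, one_pow]
        field_simp
    _ ≤ bumpCoeff γ s j * (nodeBump s K j).eval (cos (nodeAngle j)) := by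
        rw [eval_nodeBump, eval_nodeKernel_cos_nodeAngle hj, one_pow, one_mul]
        have := bumpCoeff_pos γ s j
        gcongr
        exact nodeScale_sq_le_one_sub_cos_sq j
    _ ≤ ∑ i ∈ Finset.range K, bumpCoeff γ s i * (nodeBump s K i).eval (cos (nodeAngle j)) :=
        Finset.single_le_sum (fun i _ => hterm i) (Finset.mem_range.2 hj)
    _ = _ := by simp only [testPoly, eval_finsetSum, eval_mul, eval_C]

theorem le_sum_stepHeight_mul_eval_testPoly (γ : ℝ) (s K : ℕ) :
    K * (1 / 2) ^ (s + 1) ≤ ∑ j ∈ Finset.range K, stepHeight γ j *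
      (sin (testFreq s K * nodeAngle j) * (testPoly γ s K).eval (cos (nodeAngle j))) := by
  have hterm (j : ℕ) (hj : j ∈ Finset.range K) : (1 / 2 : ℝ) ^ (s + 1) ≤ stepHeight γ j *
      (sin (testFreq s K * nodeAngle j) * (testPoly γ s K).eval (cos (nodeAngle j))) := by
    have hσ := nodeScale_pos j
    rw [testFreq, sin_mul_pow_mul_nodeAngle _ (Finset.mem_range.1 hj), one_mul, stepHeight,
      rpow_neg hσ.le, le_inv_mul_iff₀ (by positivity)]
    exact le_eval_testPoly_cos_nodeAngle γ s (Finset.mem_range.1 hj)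
  simpa using Finset.card_nsmul_le_sum _ _ _ hterm

theorem exists_le_En_nodeStep (α : ℝ) {β p : ℝ} (hp : 1 < p) (hβ : 0 ≤ 2 * β + p⁻¹) :
    ∃ c > 0, ∀ K : ℕ, 1 ≤ K → ENNReal.ofReal (c * (K / 25 ^ K) ^ p⁻¹)
      ≤ En (25 ^ K) (nodeStep (2 * β + p⁻¹) K) (jacobi α β) (ENNReal.ofReal p) := by
  obtain ⟨s, hs⟩ := exists_nat_ge (max α β)
  obtain ⟨r, hpr⟩ : ∃ r, p.HolderConjugate r := ⟨_, .conjExponent hp⟩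
  have hr : 1 - r⁻¹ = p⁻¹ := hpr.symm.one_sub_inv
  have := hpr.ennrealOfReal
  obtain ⟨C, hC, hnorm⟩ := exists_LpOn_dualTest_testPoly_le (β := β) (le_of_max_le_left hs)
    (le_of_max_le_right hs) hpr.symm.lt.le (by rwa [add_sub_assoc, hr])
  rw [add_sub_assoc, hr] at hnorm
  refine ⟨(1 / 2) ^ (s + 1) / C, by positivity, fun K hK => le_trans ?_ <|
    ofReal_sum_div_LpOn_le_En_stepSum (q := ENNReal.ofReal r) (stepHeight _)
      (fun j _ => nodeAngle_mem_Icc j) (measurable_jacobi α β)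
      (fun x hx => (jacobi_pos α β hx).ne') (natDegree_testPoly_lt (2 * β + p⁻¹) s K)⟩
  have hK0 : (0 : ℝ) < K := by exact_mod_cast hK
  have hsplit : (1 / 2) ^ (s + 1) / C * ((K : ℝ) / 25 ^ K) ^ p⁻¹
      = K * (1 / 2) ^ (s + 1) / (C * (K ^ r⁻¹ * (25 ^ K) ^ p⁻¹)) := by
    rw [div_rpow hK0.le (by positivity), ← hr, rpow_sub hK0, rpow_one]
    field_simp
  rw [hsplit, ENNReal.ofReal_div_of_pos (by positivity)]
  exact ENNReal.div_le_div (ENNReal.ofReal_le_ofReal (le_sum_stepHeight_mul_eval_testPoly _ s K))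
    (hnorm K hK)

end LowerBound

section StepNorm

theorem stepSum_rpow_le {h : ℕ → ℝ} {D r : ℝ} (hr : 0 < r) (hD : 0 ≤ D) (hh : ∀ j, 0 ≤ h j)
    (hgeom : ∀ n, ∑ j ∈ Finset.range (n + 1), h j ≤ D * h n) (K : ℕ) (t : ℕ → ℝ) (x : ℝ) :
    stepSum (Finset.range K) h t x ^ r
      ≤ D ^ r * stepSum (Finset.range K) (fun j => h j ^ r) t x := by
  classical
  have hfilter (g : ℕ → ℝ) : stepSum (Finset.range K) g t x
      = ∑ j ∈ Finset.range K with t j ≤ x, g j := by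
    simp only [stepSum, indicator_apply, mem_Ici, Finset.sum_filter]
  rw [hfilter, hfilter]
  rcases ((Finset.range K).filter fun j => t j ≤ x).eq_empty_or_nonempty with hempty | hne
  · simp [hempty, zero_rpow hr.ne']
  · obtain ⟨n, hn, hmax⟩ := Finset.exists_max_image _ id hne
    calc (∑ j ∈ Finset.range K with t j ≤ x, h j) ^ r
        ≤ (∑ j ∈ Finset.range (n + 1), h j) ^ r := by
          refine rpow_le_rpow (Finset.sum_nonneg fun j _ => hh j) ?_ hr.le
          exact Finset.sum_le_sum_of_subset_of_nonneg
            (fun j hj => Finset.mem_range.2 (Nat.lt_succ_of_le (hmax j hj))) fun j _ _ => hh j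
      _ ≤ (D * h n) ^ r := rpow_le_rpow (Finset.sum_nonneg fun j _ => hh j) (hgeom n) hr.le
      _ = D ^ r * h n ^ r := mul_rpow hD (hh n)
      _ ≤ _ := by
          gcongr
          exact Finset.single_le_sum (f := fun j => h j ^ r) (fun j _ => rpow_nonneg (hh j) r) hn

theorem stepHeight_eq_pow (γ : ℝ) (j : ℕ) : stepHeight γ j = (5 ^ γ) ^ (j + 1) := by
  rw [stepHeight, nodeScale, rpow_neg (by positivity), inv_rpow (by positivity), inv_inv,
    ← rpow_natCast, ← rpow_natCast, ← rpow_mul (by norm_num), ← rpow_mul (by norm_num), mul_comm]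

theorem exists_sum_stepHeight_le {γ : ℝ} (hγ : 0 < γ) :
    ∃ D ≥ 0, ∀ n, ∑ j ∈ Finset.range (n + 1), stepHeight γ j ≤ D * stepHeight γ n := by
  have hratio : 1 < (5 : ℝ) ^ γ := one_lt_rpow (by norm_num) hγ
  simp_rw [stepHeight_eq_pow]
  generalize (5 : ℝ) ^ γ = l at hratio
  have hl : 0 < l - 1 := by linarith
  refine ⟨l / (l - 1), by positivity, fun n => ?_⟩
  simp_rw [pow_succ l, ← Finset.sum_mul]
  rw [geom_sum_eq hratio.ne', div_mul_eq_mul_div, div_mul_eq_mul_div]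
  refine div_le_div_of_nonneg_right ?_ hl.le
  rw [← pow_succ, mul_comm l]
  gcongr
  linarith

theorem jacobi_rpow_le {α β r x : ℝ} (hr : 0 ≤ r) (hx : x ∈ Ico (0 : ℝ) 1) :
    jacobi α β x ^ r ≤ 2 ^ (|α| * r) * (1 - x) ^ (β * r) := by
  have hminus : 0 ≤ 1 - x := by linarith [hx.2]
  have hplus : (1 + x) ^ α ≤ 2 ^ |α| * 1 ^ α :=
    rpow_le_rpow_abs_mul_rpow one_le_two one_pos (by linarith [hx.1]) (by linarith [hx.2]) α
  rw [one_rpow, mul_one] at hplus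
  have hplus0 : 0 ≤ 1 + x := by linarith [hx.1]
  rw [jacobi, rpow_mul zero_le_two, rpow_mul hminus, ← mul_rpow (by positivity) (by positivity)]
  gcongr

theorem setLIntegral_one_sub_rpow {b t : ℝ} (hb : -1 < b) (ht : t ≤ 1) :
    ∫⁻ x in Icc t 1, ENNReal.ofReal ((1 - x) ^ b)
      = ENNReal.ofReal ((1 - t) ^ (b + 1) / (b + 1)) := by
  have hint : IntervalIntegrable (fun x : ℝ => (1 - x) ^ b) volume t 1 := by
    simpa using ((intervalIntegral.intervalIntegrable_rpow' hb).comp_sub_left 1 : IntervalIntegrable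
      (fun x : ℝ => (1 - x) ^ b) volume (1 - (1 - t)) (1 - 0))
  have hval : ∫ x in t..1, (1 - x) ^ b = (1 - t) ^ (b + 1) / (b + 1) := by
    rw [intervalIntegral.integral_comp_sub_left fun x => x ^ b, integral_rpow (Or.inl hb), sub_self,
      zero_rpow (by linarith), sub_zero]
  rw [← hval, intervalIntegral.integral_of_le ht, ← integral_Icc_eq_integral_Ioc,
    ofReal_integral_eq_lintegral_ofReal]
  · rwa [← IntegrableOn, integrableOn_Icc_iff_integrableOn_Ioc,
      ← intervalIntegrable_iff_integrableOn_Ioc_of_le ht]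
  · filter_upwards [ae_restrict_mem measurableSet_Icc] with x hx
    exact rpow_nonneg (by linarith [hx.2]) b

theorem setLIntegral_jacobi_rpow_le (α : ℝ) {β r t : ℝ} (hr : 0 ≤ r) (hβ : -1 < β * r)
    (ht : t ∈ Icc (0 : ℝ) 1) :
    ∫⁻ x in Icc t 1, ENNReal.ofReal (jacobi α β x ^ r)
      ≤ ENNReal.ofReal (2 ^ (|α| * r) / (β * r + 1) * (1 - t) ^ (β * r + 1)) := by
  calc _ ≤ ∫⁻ x in Icc t 1,
        ENNReal.ofReal (2 ^ (|α| * r)) * ENNReal.ofReal ((1 - x) ^ (β * r)) := by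
        rw [← restrict_Ico_eq_restrict_Icc]
        refine setLIntegral_mono' measurableSet_Ico fun x hx => ?_
        rw [← ENNReal.ofReal_mul (by positivity)]
        exact ENNReal.ofReal_le_ofReal (jacobi_rpow_le hr ⟨ht.1.trans hx.1, hx.2⟩)
    _ = _ := by
        rw [lintegral_const_mul _ (by fun_prop), setLIntegral_one_sub_rpow hβ ht.2,
          ← ENNReal.ofReal_mul (by positivity), div_mul_eq_mul_div, mul_div_assoc]

theorem exists_stepHeight_mul_setLIntegral_jacobi_le (α : ℝ) {β r : ℝ} (hr : 0 < r)
    (hβ : -1 < β * r) :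
    ∃ C ≥ 0, ∀ j, ENNReal.ofReal (stepHeight (2 * β + 2 * r⁻¹) j ^ r)
      * ∫⁻ x in Icc (cos (nodeAngle j)) 1, ENNReal.ofReal (jacobi α β x ^ r)
        ≤ ENNReal.ofReal C := by
  have hβ' : 0 < β * r + 1 := by linarith
  refine ⟨2 ^ (|α| * r) / (β * r + 1) * (5 / 4) ^ (β * r + 1), by positivity, fun j => ?_⟩
  have hσ := nodeScale_pos j
  have hheight : stepHeight (2 * β + 2 * r⁻¹) j ^ r = (nodeScale j ^ 2) ^ (-(β * r + 1)) := by
    rw [stepHeight, ← rpow_mul hσ.le, ← rpow_natCast, ← rpow_mul hσ.le]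
    congr 1
    push_cast
    field_simp
  have hjump : (1 - cos (nodeAngle j)) ^ (β * r + 1)
      ≤ (5 / 4) ^ (β * r + 1) * (nodeScale j ^ 2) ^ (β * r + 1) := by
    rw [← mul_rpow (by norm_num) (by positivity)]
    exact rpow_le_rpow (by linarith [cos_le_one (nodeAngle j)]) (one_sub_cos_nodeAngle_le j) hβ'.le
  calc _ ≤ ENNReal.ofReal (stepHeight (2 * β + 2 * r⁻¹) j ^ r) * ENNReal.ofReal
        (2 ^ (|α| * r) / (β * r + 1) * (1 - cos (nodeAngle j)) ^ (β * r + 1)) := by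
        gcongr
        exact setLIntegral_jacobi_rpow_le α hr.le hβ (cos_nodeAngle_mem_Icc j)
    _ ≤ _ := by
        rw [hheight, ← ENNReal.ofReal_mul (by positivity), rpow_neg (by positivity)]
        refine ENNReal.ofReal_le_ofReal ((inv_mul_le_iff₀ (by positivity)).2 ?_)
        calc _ ≤ 2 ^ (|α| * r) / (β * r + 1) *
              ((5 / 4) ^ (β * r + 1) * (nodeScale j ^ 2) ^ (β * r + 1)) := by gcongr
          _ = _ := by ring

theorem lintegral_ofReal_stepSum_mul {ι : Type*} {s : Finset ι} {h : ι → ℝ}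
    (hh : ∀ j ∈ s, 0 ≤ h j) (t : ι → ℝ) {g : ℝ → ℝ≥0∞} (hg : Measurable g) (μ : Measure ℝ) :
    ∫⁻ x, ENNReal.ofReal (stepSum s h t x) * g x ∂μ
      = ∑ j ∈ s, ENNReal.ofReal (h j) * ∫⁻ x in Ici (t j), g x ∂μ := by
  have hterm (j : ι) (x : ℝ) : ENNReal.ofReal ((Ici (t j)).indicator (fun _ => h j) x) * g x
      = ENNReal.ofReal (h j) * (Ici (t j)).indicator g x := by
    by_cases hx : x ∈ Ici (t j) <;> simp [hx]
  have hpoint (x : ℝ) : ENNReal.ofReal (stepSum s h t x) * g x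
      = ∑ j ∈ s, ENNReal.ofReal (h j) * (Ici (t j)).indicator g x := by
    rw [stepSum, ENNReal.ofReal_sum_of_nonneg fun j hj => indicator_nonneg (fun _ _ => hh j hj) x,
      Finset.sum_mul]
    exact Finset.sum_congr rfl fun j _ => hterm j x
  have hmeas (j : ι) : Measurable ((Ici (t j)).indicator g) := hg.indicator measurableSet_Ici
  simp_rw [hpoint]
  rw [lintegral_finsetSum _ fun j _ => (hmeas j).const_mul _]
  exact Finset.sum_congr rfl fun j _ => by
    rw [lintegral_const_mul _ (hmeas j), lintegral_indicator measurableSet_Ici]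

theorem setLIntegral_abs_jacobi_mul_stepSum_rpow_le (α β : ℝ) {h : ℕ → ℝ} {D r : ℝ} (hr : 0 < r)
    (hD : 0 ≤ D) (hh : ∀ j, 0 ≤ h j)
    (hgeom : ∀ n, ∑ j ∈ Finset.range (n + 1), h j ≤ D * h n) (K : ℕ) (t : ℕ → ℝ) :
    ∫⁻ x in Icc (-1) 1, ENNReal.ofReal (|jacobi α β x * stepSum (Finset.range K) h t x| ^ r)
      ≤ ENNReal.ofReal (D ^ r) * ∑ j ∈ Finset.range K, ENNReal.ofReal (h j ^ r)
        * ∫⁻ x in Icc (t j) 1, ENNReal.ofReal (jacobi α β x ^ r) := by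
  have hhr (j : ℕ) : 0 ≤ h j ^ r := rpow_nonneg (hh j) r
  calc _ ≤ ∫⁻ x in Icc (-1) 1, ENNReal.ofReal (D ^ r)
        * (ENNReal.ofReal (stepSum (Finset.range K) (fun j => h j ^ r) t x)
          * ENNReal.ofReal (jacobi α β x ^ r)) := by
        rw [← restrict_Ioo_eq_restrict_Icc]
        refine setLIntegral_mono' measurableSet_Ioo fun x hx => ?_
        have hw := (jacobi_pos α β hx).le
        have hf := stepSum_nonneg t (s := Finset.range K) (fun j _ => hh j) x
        rw [abs_of_nonneg (mul_nonneg hw hf), mul_rpow hw hf,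
          ← ENNReal.ofReal_mul (stepSum_nonneg t (fun j _ => hhr j) x),
          ← ENNReal.ofReal_mul (by positivity), ← mul_assoc, mul_comm]
        gcongr
        exact stepSum_rpow_le hr hD hh hgeom K t x
    _ ≤ _ := by
        rw [lintegral_const_mul _ (by fun_prop),
          lintegral_ofReal_stepSum_mul (fun j _ => hhr j) t (by fun_prop)]
        gcongr ENNReal.ofReal _ * ∑ j ∈ _, ENNReal.ofReal _ * ?_ with j
        rw [Measure.restrict_restrict measurableSet_Ici]
        exact lintegral_mono_set fun x hx => ⟨hx.1, hx.2.2⟩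

theorem exists_lintegral_jacobi_mul_nodeStep_rpow_le (α : ℝ) {β r : ℝ} (hr : 0 < r)
    (hβ : -1 < β * r) :
    ∃ C > 0, ∀ K : ℕ, ∫⁻ x in Icc (-1) 1,
      ENNReal.ofReal (|jacobi α β x * nodeStep (2 * β + 2 * r⁻¹) K x| ^ r)
        ≤ ENNReal.ofReal (C * K) := by
  have hγ : 0 < 2 * β + 2 * r⁻¹ := by
    have : 0 < (β * r + 1) * r⁻¹ := mul_pos (by linarith) (by positivity)
    rw [add_mul, mul_inv_cancel_right₀ hr.ne'] at this
    linarith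
  obtain ⟨D, hD, hgeom⟩ := exists_sum_stepHeight_le hγ
  obtain ⟨C, hC, hjump⟩ := exists_stepHeight_mul_setLIntegral_jacobi_le α hr hβ
  refine ⟨D ^ r * C + 1, by positivity, fun K => ?_⟩
  calc _ ≤ ENNReal.ofReal (D ^ r) * ∑ _ ∈ Finset.range K, ENNReal.ofReal C := by
        refine (setLIntegral_abs_jacobi_mul_stepSum_rpow_le α β hr hD
          (fun j => (stepHeight_pos _ j).le) hgeom K _).trans ?_
        gcongr
        exact hjump _
    _ = ENNReal.ofReal (D ^ r * C * K) := by
        rw [Finset.sum_const, Finset.card_range, nsmul_eq_mul, ← ENNReal.ofReal_natCast,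
          ← ENNReal.ofReal_mul (by positivity), ← ENNReal.ofReal_mul (by positivity)]
        ring_nf
    _ ≤ _ := by gcongr; linarith

theorem exists_LpOn_jacobi_mul_nodeStep_le (α : ℝ) {β r : ℝ} (hr : 0 < r) (hβ : -1 < β * r) :
    ∃ C > 0, ∀ K : ℕ,
      LpOn (fun x => jacobi α β x * nodeStep (2 * β + 2 * r⁻¹) K x) (ENNReal.ofReal r) (-1) 1
        ≤ ENNReal.ofReal (C * K ^ r⁻¹) := by
  obtain ⟨C, hC, hint⟩ := exists_lintegral_jacobi_mul_nodeStep_rpow_le α hr hβ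
  refine ⟨C ^ r⁻¹, by positivity, fun K => ?_⟩
  rw [LpOn_ofReal _ hr, one_div]
  refine (ENNReal.rpow_le_rpow (hint K) (by positivity)).trans_eq ?_
  rw [ENNReal.ofReal_rpow_of_nonneg (by positivity) (by positivity), mul_rpow hC.le (by positivity)]

end StepNorm

section Classes

theorem kMonotoneOn_one_of_monotone {f : ℝ → ℝ} (hf : Monotone f) : kMonotoneOn 1 f := by
  intro x _ _
  have hslope : ∑ i, f (x i) / ∏ j ∈ Finset.univ.erase i, (x i - x j)
      = (f (x 1) - f (x 0)) / (x 1 - x 0) := by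
    rw [Fin.sum_univ_two, show Finset.univ.erase (0 : Fin 2) = {1} from rfl,
      show Finset.univ.erase (1 : Fin 2) = {0} from rfl, Finset.prod_singleton,
      Finset.prod_singleton, ← neg_sub (x 1), div_neg, sub_div]
    ring
  rw [hslope]
  rcases le_total (x 0) (x 1) with h | h
  · exact div_nonneg (sub_nonneg.2 (hf h)) (sub_nonneg.2 h)
  · exact div_nonneg_of_nonpos (sub_nonpos.2 (hf h)) (sub_nonpos.2 h)

theorem kMonotoneOn_const_mul {k : ℕ} {f : ℝ → ℝ} {c : ℝ} (hc : 0 ≤ c) (hf : kMonotoneOn k f) :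
    kMonotoneOn k fun x => c * f x := by
  intro x hinj hx
  simp_rw [mul_div_assoc, ← Finset.mul_sum]
  exact mul_nonneg hc (hf x hinj hx)

theorem LpOn_const_mul {c : ℝ} (hc : 0 ≤ c) (g : ℝ → ℝ) (p : ℝ≥0∞) (a b : ℝ) :
    LpOn (fun x => c * g x) p a b = ENNReal.ofReal c * LpOn g p a b := by
  rw [← enorm_of_nonneg hc]
  exact eLpNorm_const_smul c g p _

theorem En_const_mul_le {c : ℝ} (hc : 0 < c) (n : ℕ) (f w : ℝ → ℝ) (q : ℝ≥0∞) :
    En n (fun x => c * f x) w q ≤ ENNReal.ofReal c * En n f w q := by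
  have hc0 : ENNReal.ofReal c ≠ 0 := (ENNReal.ofReal_pos.2 hc).ne'
  simp_rw [En, ENNReal.mul_iInf_of_ne hc0 ENNReal.ofReal_ne_top]
  refine le_iInf₂ fun P hP => iInf₂_le_of_le (C c * P) ((natDegree_C_mul_le c P).trans hP) ?_
  rw [← LpOn_const_mul hc.le]
  refine le_of_eq (congrArg (LpOn · q (-1) 1) (funext fun x => ?_))
  rw [eval_mul, eval_C]
  ring

theorem En_eq_zero_of_LpOn_eq_zero {p : ℝ≥0∞} (hp : p ≠ 0) {f w : ℝ → ℝ} (hw : Measurable w)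
    (hf : Measurable f) (h0 : LpOn (fun x => w x * f x) p (-1) 1 = 0) (n : ℕ) (q : ℝ≥0∞) :
    En n f w q = 0 := by
  rw [LpOn, eLpNorm_eq_zero_iff (by fun_prop) hp] at h0
  have hnorm : LpOn (fun x => w x * (f x - (0 : ℝ[X]).eval x)) q (-1) 1 = 0 := by
    simp_rw [eval_zero, sub_zero]
    rw [LpOn, eLpNorm_congr_ae h0, eLpNorm_zero]
  exact nonpos_iff_eq_zero.1 ((iInf₂_le 0 (by simp)).trans_eq hnorm)

theorem En_le_LpOn_mul_EClass {k : ℕ} {f : ℝ → ℝ} {p : ℝ≥0∞} {α β : ℝ} (hp : p ≠ 0)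
    (hf : f ∈ MSet k) (hmeas : Measurable f)
    (hfin : LpOn (fun x => jacobi α β x * f x) p (-1) 1 ≠ ⊤) (n : ℕ) (q : ℝ≥0∞) :
    En n f (jacobi α β) q ≤ LpOn (fun x => jacobi α β x * f x) p (-1) 1
      * EClass (MSet k ∩ BSet p α β) n (jacobi α β) q := by
  rcases eq_or_ne (LpOn (fun x => jacobi α β x * f x) p (-1) 1) 0 with h0 | h0
  · simp [En_eq_zero_of_LpOn_eq_zero hp (measurable_jacobi α β) hmeas h0]
  set a := (LpOn (fun x => jacobi α β x * f x) p (-1) 1).toReal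
  have ha : 0 < a := ENNReal.toReal_pos h0 hfin
  have hnorm : LpOn (fun x => jacobi α β x * f x) p (-1) 1 = ENNReal.ofReal a :=
    (ENNReal.ofReal_toReal hfin).symm
  have hmem : (fun x => a⁻¹ * f x) ∈ MSet k ∩ BSet p α β := by
    refine ⟨kMonotoneOn_const_mul (inv_nonneg.2 ha.le) hf, hmeas.const_mul _, ?_⟩
    simp_rw [mul_left_comm _ a⁻¹]
    rw [LpOn_const_mul (by positivity), hnorm, ← ENNReal.ofReal_mul (by positivity),
      inv_mul_cancel₀ ha.ne', ENNReal.ofReal_one]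
  calc En n f (jacobi α β) q
      = En n (fun x => a * (a⁻¹ * f x)) (jacobi α β) q := by
        simp_rw [mul_inv_cancel_left₀ ha.ne']
    _ ≤ ENNReal.ofReal a * En n (fun x => a⁻¹ * f x) (jacobi α β) q := En_const_mul_le ha ..
    _ ≤ _ := by
        rw [hnorm]
        gcongr
        exact le_iSup₂ (f := fun g (_ : g ∈ MSet k ∩ BSet p α β) => En n g (jacobi α β) q) _ hmem

theorem exists_le_EClass_MSet_one_inter_BSet (α : ℝ) {β p : ℝ} (hp : 1 < p) (hβ : -(2 * p)⁻¹ < β) :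
    ∃ c > 0, ∀ K : ℕ, 1 ≤ K → ENNReal.ofReal (c * (K ^ (2 * p)⁻¹ / (25 ^ K) ^ p⁻¹))
      ≤ EClass (MSet 1 ∩ BSet (ENNReal.ofReal (2 * p)) α β) (25 ^ K) (jacobi α β)
        (ENNReal.ofReal p) := by
  have hexp : 2 * (2 * p)⁻¹ = p⁻¹ := by field_simp
  have hβp : -1 < β * (2 * p) := by
    rwa [← div_lt_iff₀ (by linarith), neg_div, one_div]
  obtain ⟨c, hc, hlower⟩ := exists_le_En_nodeStep α (β := β) hp (by linarith)
  obtain ⟨C, hC, hnorm⟩ := exists_LpOn_jacobi_mul_nodeStep_le α (by linarith) hβp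
  rw [hexp] at hnorm
  refine ⟨c / C, by positivity, fun K hK => ?_⟩
  have hmono : nodeStep (2 * β + p⁻¹) K ∈ MSet 1 :=
    kMonotoneOn_one_of_monotone (monotone_stepSum _ fun j _ => (stepHeight_pos _ j).le)
  have hK0 : (0 : ℝ) < K := by exact_mod_cast hK
  have hsplit : c / C * ((K : ℝ) ^ (2 * p)⁻¹ / (25 ^ K) ^ p⁻¹)
      = c * (K / 25 ^ K) ^ p⁻¹ / (C * K ^ (2 * p)⁻¹) := by
    rw [div_rpow hK0.le (by positivity), ← hexp, two_mul (2 * p)⁻¹, rpow_add hK0]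
    field_simp
  rw [hsplit, ENNReal.ofReal_div_of_pos (by positivity)]
  refine ENNReal.div_le_of_le_mul' ?_
  calc _ ≤ En (25 ^ K) (nodeStep (2 * β + p⁻¹) K) (jacobi α β) (ENNReal.ofReal p) := hlower K hK
    _ ≤ _ := En_le_LpOn_mul_EClass (ENNReal.ofReal_pos.2 (by linarith)).ne' hmono
        (measurable_stepSum ..) (ne_top_of_le_ne_top ENNReal.ofReal_ne_top (hnorm K)) _ _
    _ ≤ _ := by
        gcongr
        exact hnorm K

end Classes

section Limsup

theorem log_pow_add_one_le {a : ℝ} (ha : 1 ≤ a) {K : ℕ} (hK : K ≠ 0) :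
    log (a ^ K + 1) ≤ K * log (2 * a) := by
  have h2 : (2 : ℝ) ≤ 2 ^ K := le_self_pow₀ one_le_two hK
  rw [← log_pow, mul_pow]
  refine log_le_log (by positivity) ?_
  nlinarith [one_le_pow₀ ha (n := K)]

theorem le_rpow_mul_log_rpow_mul {a c s : ℝ} (ha : 1 < a) (hc : 0 ≤ c) (hs : 0 ≤ s) (t ε : ℝ)
    {K : ℕ} (hK : K ≠ 0) :
    c / log (2 * a) ^ s * log (a ^ K + 1) ^ ε
      ≤ (a ^ K) ^ t * log (a ^ K + 1) ^ (-s + ε) * (c * (K ^ s / (a ^ K) ^ t)) := by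
  have haK : 1 < a ^ K := one_lt_pow₀ ha hK
  have hlog : 0 < log (a ^ K + 1) := log_pos (by linarith)
  have hlog2 : 0 < log (2 * a) := log_pos (by linarith)
  have hrpow : log (a ^ K + 1) ^ s ≤ K ^ s * log (2 * a) ^ s := by
    rw [← mul_rpow (by positivity) hlog2.le]
    exact rpow_le_rpow hlog.le (log_pow_add_one_le ha.le hK) hs
  calc _ = c * log (a ^ K + 1) ^ ε * (1 / log (2 * a) ^ s) := by ring
    _ ≤ c * log (a ^ K + 1) ^ ε * (K ^ s / log (a ^ K + 1) ^ s) := by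
        refine mul_le_mul_of_nonneg_left ?_ (by positivity)
        rwa [div_le_div_iff₀ (by positivity) (by positivity), one_mul]
    _ = _ := by
        rw [rpow_add hlog, rpow_neg hlog.le]
        field_simp

theorem limsup_ofReal_rpow_mul_log_rpow_mul_eq_top {E : ℕ → ℝ≥0∞} {a : ℕ} {c s t ε : ℝ}
    (ha : 1 < a) (hc : 0 < c) (hs : 0 ≤ s) (hε : 0 < ε)
    (hE : ∀ K : ℕ, 1 ≤ K → ENNReal.ofReal (c * (K ^ s / (a ^ K) ^ t)) ≤ E (a ^ K)) :
    limsup (fun n : ℕ => ENNReal.ofReal (n ^ t * log (n + 1) ^ (-s + ε)) * E n) atTop = ⊤ := by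
  have ha' : (1 : ℝ) < a := by exact_mod_cast ha
  have hlog2 : 0 < log (2 * a) := log_pos (by linarith)
  have hlog : Tendsto (fun K : ℕ => log ((a : ℝ) ^ K + 1)) atTop atTop :=
    tendsto_log_atTop.comp <|
      tendsto_atTop_add_const_right _ _ (tendsto_pow_atTop_atTop_of_one_lt ha')
  have hminorant : Tendsto (fun K : ℕ => ENNReal.ofReal
      (c / log (2 * a) ^ s * log ((a : ℝ) ^ K + 1) ^ ε)) atTop (nhds ⊤) :=
    ENNReal.tendsto_ofReal_atTop.comp <|
      ((tendsto_rpow_atTop hε).comp hlog).const_mul_atTop (by positivity)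
  set u : ℕ → ℝ≥0∞ := fun n => ENNReal.ofReal (n ^ t * log (n + 1) ^ (-s + ε)) * E n
  have hsubseq : Tendsto (u ∘ (a ^ ·)) atTop (nhds ⊤) := by
    refine tendsto_nhds_top_mono hminorant ?_
    filter_upwards [eventually_ge_atTop 1] with K hK
    have hlogK : 0 ≤ log ((a : ℝ) ^ K + 1) := log_nonneg (le_add_of_nonneg_left (by positivity))
    refine le_trans (ENNReal.ofReal_le_ofReal
      (le_rpow_mul_log_rpow_mul ha' hc.le hs t ε (Nat.one_le_iff_ne_zero.1 hK))) ?_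
    rw [ENNReal.ofReal_mul (by positivity)]
    simp only [u, Function.comp_apply, Nat.cast_pow]
    gcongr
    exact hE K hK
  rw [eq_top_iff, ← hsubseq.limsup_eq, limsup_comp]
  exact limsup_le_limsup_of_le (tendsto_pow_atTop_atTop_of_one_lt ha)

end Limsup

end

theorem statement8_general (q : ℝ≥0∞) (hq1 : 1 < q) (hq2 : q ≠ ∞) (α : ℝ) {β : ℝ}
    (hβ : -(1 / (2 * q.toReal)) < β) {ε : ℝ} (hε : 0 < ε) :
    limsup (fun n : ℕ =>
        ENNReal.ofReal ((n : ℝ) ^ (1 / q.toReal) *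
            Real.log ((n : ℝ) + 1) ^ (-(1 / (2 * q.toReal)) + ε)) *
          EClass (MSet 1 ∩ BSet (2 * q) α β) n (jacobi α β) q) atTop = ⊤ := by
  lift q to NNReal using hq2
  have hq : 1 < (q : ℝ) := by exact_mod_cast hq1
  simp only [ENNReal.coe_toReal, one_div] at hβ ⊢
  obtain ⟨c, hc, hlower⟩ := exists_le_EClass_MSet_one_inter_BSet α hq hβ
  rw [ENNReal.ofReal_mul zero_le_two, ENNReal.ofReal_coe_nnreal, ENNReal.ofReal_ofNat] at hlower
  exact limsup_ofReal_rpow_mul_log_rpow_mul_eq_top (a := 25) (by norm_num) hc (by positivity) hε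
    (by exact_mod_cast hlower)

theorem statement8 (q : ℝ≥0∞) (hq1 : 1 < q) (hq2 : q ≠ ∞)
    (α β : ℝ) (hα : 0 ≤ α) (hβ : 0 ≤ β) :
    ∀ ε : ℝ, 0 < ε →
      Filter.limsup (fun n : ℕ =>
          ENNReal.ofReal ((n : ℝ) ^ (1 / q.toReal) *
              Real.log ((n : ℝ) + 1) ^ (-(1 / (2 * q.toReal)) + ε)) *
            EClass (MSet 1 ∩ BSet (2 * q) α β) n (jacobi α β) q) Filter.atTop = ⊤ := by
  have hβ' : -(1 / (2 * q.toReal)) < β := hβ.trans_lt' <| neg_lt_zero.2 <| one_div_pos.2 <|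
    mul_pos two_pos <| ENNReal.toReal_pos (zero_lt_one.trans hq1).ne' hq2
  exact fun ε hε => statement8_general q hq1 hq2 α hβ' hε
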